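/- (Theorem 3.3, hypercubic case, strong form) Fix an integer d ≥ 1, m > 0 and x, y ∈ ℝ^d with x ≠ y. Then the finite measures V'_{x,y,a} on Ω(x,y) converge weakly to (m²/2)·V'_{x,y} as a → 0⁺ along values of a with x − y ∈ aℤ^d. -/

import Mathlib

open MeasureTheory Filter Topology Real Set
open scoped RealInnerProductSpace ENNReal unitInterval

noncomputable section

/-- `ℝ^d` as a Euclidean space. -/
abbrev Ed (d : ℕ) := EuclideanSpace ℝ (Fin d)

/-- The space of continuous paths `[0,1] → ℝ^d`, with the uniform metric. -/
abbrev PathSp (d : ℕ) := C(unitInterval, Ed d)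

instance (d : ℕ) : MeasurableSpace (PathSp d) := borel _
instance (d : ℕ) : BorelSpace (PathSp d) := ⟨rfl⟩

/-- Evaluation of a path at a real time, clamped to `[0,1]`. -/
def evalAt {d : ℕ} (ω : PathSp d) (t : ℝ) : Ed d := ω (Set.projIcc 0 1 zero_le_one t)

/-- `Ω(x)`: continuous paths starting at `x`. -/
abbrev Omega1 {d : ℕ} (x : Ed d) := {ω : PathSp d // ω 0 = x}

/-- `Ω(x,y)`: continuous paths from `x` to `y`. -/
abbrev Omega2 {d : ℕ} (x y : Ed d) := {ω : PathSp d // ω 0 = x ∧ ω 1 = y}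

/-- clamp a real number to `[0,1]`. -/
def clamp01 (r : ℝ) : ℝ := min 1 (max 0 r)

lemma clamp01_of_nonpos {r : ℝ} (h : r ≤ 0) : clamp01 r = 0 := by
  rw [clamp01, max_eq_left h, min_eq_right zero_le_one]

lemma clamp01_of_one_le {r : ℝ} (h : 1 ≤ r) : clamp01 r = 1 := by
  rw [clamp01, max_eq_right (zero_le_one.trans h), min_eq_left h]

lemma clamp01_continuous : Continuous clamp01 :=
  continuous_const.min (continuous_const.max continuous_id)

/-- The piecewise linear path starting at `x` with `N` steps given by the increments `v i`,
the `i`-th step being linearly parametrized by `[i/N, (i+1)/N]`. -/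
def pwLinE {d : ℕ} (x : Ed d) (N : ℕ) (v : Fin N → Ed d) : PathSp d :=
  ⟨fun t => x + ∑ i : Fin N, clamp01 ((N : ℝ) * (t : ℝ) - ((i : ℕ) : ℝ)) • v i, by
    refine continuous_const.add (continuous_finset_sum _ fun i _ => ?_)
    exact ((clamp01_continuous.comp
      ((continuous_const.mul continuous_subtype_val).sub continuous_const)).smul
      continuous_const)⟩

lemma pwLinE_zero {d : ℕ} (x : Ed d) (N : ℕ) (v : Fin N → Ed d) :
    pwLinE x N v 0 = x := by
  show x + ∑ i : Fin N, clamp01 ((N : ℝ) * ((0 : unitInterval) : ℝ) - ((i : ℕ) : ℝ)) • v i = x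
  have h : ∀ i : Fin N, clamp01 ((N : ℝ) * ((0 : unitInterval) : ℝ) - ((i : ℕ) : ℝ)) = 0 := by
    intro i
    apply clamp01_of_nonpos
    have h0 : ((0 : unitInterval) : ℝ) = 0 := rfl
    rw [h0, mul_zero, zero_sub]
    exact neg_nonpos.mpr (Nat.cast_nonneg (i : ℕ))
  simp only [h, zero_smul, Finset.sum_const_zero, add_zero]

lemma pwLinE_one {d : ℕ} (x : Ed d) (N : ℕ) (v : Fin N → Ed d) :
    pwLinE x N v 1 = x + ∑ i : Fin N, v i := by
  show x + ∑ i : Fin N, clamp01 ((N : ℝ) * ((1 : unitInterval) : ℝ) - ((i : ℕ) : ℝ)) • v i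
      = x + ∑ i : Fin N, v i
  have h : ∀ i : Fin N, clamp01 ((N : ℝ) * ((1 : unitInterval) : ℝ) - ((i : ℕ) : ℝ)) = 1 := by
    intro i
    apply clamp01_of_one_le
    have h1 : ((1 : unitInterval) : ℝ) = 1 := rfl
    have h2 : ((i : ℕ) : ℝ) + 1 ≤ (N : ℝ) := by
      exact_mod_cast Nat.succ_le_of_lt i.isLt
    rw [h1, mul_one]; linarith
  simp only [h, one_smul]

/-- Piecewise linear element of `Ω(x)` with increments `v`. -/
def pwLin1 {d : ℕ} (x : Ed d) (N : ℕ) (v : Fin N → Ed d) : Omega1 x :=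
  ⟨pwLinE x N v, pwLinE_zero x N v⟩

/-- Piecewise linear element of `Ω(x,y)` with increments `v` summing to `y - x`. -/
def pwLin2 {d : ℕ} (x y : Ed d) (N : ℕ) (v : Fin N → Ed d)
    (h : x + ∑ i : Fin N, v i = y) : Omega2 x y :=
  ⟨pwLinE x N v, pwLinE_zero x N v, by rw [pwLinE_one, h]⟩

/-- the point preceding `x_i` in the list `x, x_1, …, x_N`. -/
def prevPt {d : ℕ} (x : Ed d) {N : ℕ} (xs : Fin N → Ed d) (i : Fin N) : Ed d :=
  if (i : ℕ) = 0 then x else xs ⟨(i : ℕ) - 1, lt_of_le_of_lt (Nat.pred_le _) i.isLt⟩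

/-- The discrete measure `W_{x,a,N}`, i.e. the measure
`∏_{i=1}^N (2πa²)^{-d/2} exp(-|x_i - x_{i-1}|²/(2a²)) dx_1 … dx_N` (with `x_0 = x`)
on `N`-step piecewise linear paths, placed on `{a²N} × Ω(x) ⊆ ℝ × Ω(x)`.
For `N = 0` this is the Dirac measure at `(0, constant path at x)`. -/
def WxaN {d : ℕ} (x : Ed d) (a : ℝ) (N : ℕ) : Measure (ℝ × Omega1 x) :=
  Measure.map
    (fun xs : Fin N → Ed d =>
      ((a ^ 2 * N : ℝ), pwLin1 x N fun i => xs i - prevPt x xs i))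
    (volume.withDensity fun xs : Fin N → Ed d =>
      ENNReal.ofReal (∏ i : Fin N,
        (2 * π * a ^ 2) ^ (-(d : ℝ) / 2) *
          Real.exp (-‖xs i - prevPt x xs i‖ ^ 2 / (2 * a ^ 2))))

/-- The approximating probability measure
`W_{x,a} = (1 - e^{-m²a²/2}) Σ_{N=0}^∞ e^{-m²a²N/2} W_{x,a,N}`. -/
def Wxa {d : ℕ} (x : Ed d) (m a : ℝ) : Measure (ℝ × Omega1 x) :=
  ENNReal.ofReal (1 - Real.exp (-m ^ 2 * a ^ 2 / 2)) •
    Measure.sum fun N : ℕ =>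
      ENNReal.ofReal (Real.exp (-m ^ 2 * a ^ 2 * N / 2)) • WxaN x a N

/-- The lattice step of length `a` in direction `p.1`, forwards or backwards
according to `p.2`. -/
def stepVec {d : ℕ} (a : ℝ) (p : Fin d × Bool) : Ed d :=
  (if p.2 then a else -a) • EuclideanSpace.single p.1 (1 : ℝ)

/-- The normalized counting measure `V'_{x,a,N}` giving mass `(2d)^{-N}` to each
(piecewise linearly parametrized) `N`-step nearest-neighbour lattice path in `x + aℤ^d`
starting at `x`.  For `N = 0` it is the Dirac measure at the constant path. -/
def VxaN {d : ℕ} (x : Ed d) (a : ℝ) (N : ℕ) : Measure (Omega1 x) :=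
  Measure.sum fun s : Fin N → Fin d × Bool =>
    (((2 * d : ℕ) : ℝ≥0∞) ^ N)⁻¹ •
      Measure.dirac (pwLin1 x N fun i => stepVec a (s i))

/-- The approximating probability measure
`V'_{x,a} = (1 - e^{-m²a²/(2d)}) Σ_{N=0}^∞ e^{-m²a²N/(2d)} V'_{x,a,N}`. -/
def Vxa {d : ℕ} (x : Ed d) (m a : ℝ) : Measure (Omega1 x) :=
  ENNReal.ofReal (1 - Real.exp (-m ^ 2 * a ^ 2 / (2 * d))) •
    Measure.sum fun N : ℕ =>
      ENNReal.ofReal (Real.exp (-m ^ 2 * a ^ 2 * N / (2 * d))) • VxaN x a N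

/-- `Wt` is the family of Wiener measures `(W_x^t)_{t>0}` on `Ω(x)`:
each `W_x^t` is a Borel probability measure, characterized by the characteristic
functions of its finite dimensional distributions
`∫ exp(i Σ_j ξ_j·ω(t_j)) dW_x^t = exp(-(t/2) Σ_j (t_j - t_{j-1}) |ξ_j + ⋯ + ξ_n|²
+ i x·(ξ_1 + ⋯ + ξ_n))` for all `0 = t_0 < t_1 < ⋯ < t_n ≤ 1`. -/
def IsWienerFamily {d : ℕ} (x : Ed d) (Wt : ℝ → Measure (Omega1 x)) : Prop :=
  ∀ t : ℝ, 0 < t → (IsProbabilityMeasure (Wt t) ∧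
    ∀ (n : ℕ) (ts : ℕ → ℝ), ts 0 = 0 → (∀ i < n, ts i < ts (i + 1)) → ts n ≤ 1 →
      ∀ ξ : Fin n → Ed d,
        (∫ ω : Omega1 x, Complex.exp (Complex.I *
            ((∑ i : Fin n, ⟪ξ i, evalAt ω.1 (ts ((i : ℕ) + 1))⟫ : ℝ) : ℂ)) ∂(Wt t))
          = Complex.exp
              (((-(t / 2) * ∑ i : Fin n,
                  (ts ((i : ℕ) + 1) - ts (i : ℕ)) * ‖∑ j ∈ Finset.Ici i, ξ j‖ ^ 2 : ℝ) : ℂ)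
                + Complex.I * ((⟪∑ j, ξ j, x⟫ : ℝ) : ℂ)))


/-- the sequence of points `x, vs 0, …, vs (N-1), y` (with value `y` from index `N+1` on). -/
def pinPts {d : ℕ} (x y : Ed d) {N : ℕ} (vs : Fin N → Ed d) (j : ℕ) : Ed d :=
  if h0 : j = 0 then x else if h : j ≤ N then vs ⟨j - 1, by omega⟩ else y

lemma pinPts_zero {d : ℕ} (x y : Ed d) {N : ℕ} (vs : Fin N → Ed d) :
    pinPts x y vs 0 = x := by simp [pinPts]

lemma pinPts_last {d : ℕ} (x y : Ed d) {N : ℕ} (vs : Fin N → Ed d) :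
    pinPts x y vs (N + 1) = y := by
  have h1 : ¬(N + 1 = 0) := Nat.succ_ne_zero N
  have h2 : ¬(N + 1 ≤ N) := by omega
  simp [pinPts, h1, h2]

lemma pin_telescope {d : ℕ} (x y : Ed d) {N : ℕ} (vs : Fin N → Ed d) :
    x + ∑ i : Fin (N + 1), (pinPts x y vs ((i : ℕ) + 1) - pinPts x y vs (i : ℕ)) = y := by
  rw [Fin.sum_univ_eq_sum_range (fun j => pinPts x y vs (j + 1) - pinPts x y vs j) (N + 1)]
  rw [Finset.sum_range_sub (fun j => pinPts x y vs j) (N + 1)]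
  rw [pinPts_zero, pinPts_last]
  abel

/-- The discrete measure `W_{x,y,a,N+1}`, i.e. the measure
`∏_{i=1}^{N+1} (2πa²)^{-d/2} exp(-|x_i - x_{i-1}|²/(2a²)) dx_1 … dx_N`
(with `x_0 = x`, `x_{N+1} = y`) on `(N+1)`-step piecewise linear paths from `x` to `y`,
placed on `{a²(N+1)} × Ω(x,y) ⊆ ℝ × Ω(x,y)`.  For `N = 0` this is the point mass of
weight `(2πa²)^{-d/2} e^{-|x-y|²/(2a²)}` at `(a², linear path from x to y)`. -/
def WxyaN {d : ℕ} (x y : Ed d) (a : ℝ) (N : ℕ) : Measure (ℝ × Omega2 x y) :=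
  Measure.map
    (fun vs : Fin N → Ed d =>
      ((a ^ 2 * (N + 1) : ℝ),
        pwLin2 x y (N + 1) (fun i => pinPts x y vs ((i : ℕ) + 1) - pinPts x y vs (i : ℕ))
          (pin_telescope x y vs)))
    (volume.withDensity fun vs : Fin N → Ed d =>
      ENNReal.ofReal (∏ i : Fin (N + 1),
        (2 * π * a ^ 2) ^ (-(d : ℝ) / 2) *
          Real.exp (-‖pinPts x y vs ((i : ℕ) + 1) - pinPts x y vs (i : ℕ)‖ ^ 2 /
            (2 * a ^ 2))))

/-- The approximating measure
`W_{x,y,a} = (1 - e^{-m²a²/2}) Σ_{N=1}^∞ e^{-m²a²N/2} W_{x,y,a,N}`. -/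
def Wxya {d : ℕ} (x y : Ed d) (m a : ℝ) : Measure (ℝ × Omega2 x y) :=
  ENNReal.ofReal (1 - Real.exp (-m ^ 2 * a ^ 2 / 2)) •
    Measure.sum fun N : ℕ =>
      ENNReal.ofReal (Real.exp (-m ^ 2 * a ^ 2 * (N + 1) / 2)) • WxyaN x y a N

/-- The measure `V'_{x,y,a,N}` giving mass `a^{-d} (2d)^{-N}` to each
(piecewise linearly parametrized) `N`-step nearest-neighbour lattice path
in `x + aℤ^d` from `x` to `y`. -/
def VxyaN {d : ℕ} (x y : Ed d) (a : ℝ) (N : ℕ) : Measure (Omega2 x y) :=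
  Measure.sum fun s : {s : Fin N → Fin d × Bool // x + ∑ i, stepVec a (s i) = y} =>
    (ENNReal.ofReal (a ^ (-(d : ℝ))) * (((2 * d : ℕ) : ℝ≥0∞) ^ N)⁻¹) •
      Measure.dirac (pwLin2 x y N (fun i => stepVec a (s.1 i)) s.2)

/-- The approximating measure
`V'_{x,y,a} = (1 - e^{-m²a²/(2d)}) Σ_{N=1}^∞ e^{-m²a²N/(2d)} V'_{x,y,a,N}`. -/
def Vxya {d : ℕ} (x y : Ed d) (m a : ℝ) : Measure (Omega2 x y) :=
  ENNReal.ofReal (1 - Real.exp (-m ^ 2 * a ^ 2 / (2 * d))) •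
    Measure.sum fun N : ℕ =>
      ENNReal.ofReal (Real.exp (-m ^ 2 * a ^ 2 * (N + 1) / (2 * d))) • VxyaN x y a (N + 1)

/-- `Wt` is the family of pinned Wiener measures `(W_{x,y}^t)_{t>0}` on `Ω(x,y)`:
finite Borel measures characterized by the characteristic functions of their finite
dimensional distributions: for `0 = t_0 < t_1 < ⋯ < t_n < 1`, with `η_i = ξ_i + ⋯ + ξ_n`,
`∫ exp(i Σ_j ξ_j·ω(t_j)) dW_{x,y}^t = (2πt)^{-d/2} e^{-|x-y|²/(2t)} ·
exp(-(t/2)(Σ_j (t_j - t_{j-1})|η_j|² - |Σ_j t_j ξ_j|²) + i Σ_j ((1-t_j)x + t_j y)·ξ_j)`;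
in particular (`n = 0`) the total mass is the heat kernel `(2πt)^{-d/2} e^{-|x-y|²/(2t)}`. -/
def IsPinnedWienerFamily {d : ℕ} (x y : Ed d) (Wt : ℝ → Measure (Omega2 x y)) : Prop :=
  ∀ t : ℝ, 0 < t → (IsFiniteMeasure (Wt t) ∧
    ∀ (n : ℕ) (ts : ℕ → ℝ), ts 0 = 0 → (∀ i < n, ts i < ts (i + 1)) → ts n < 1 →
      ∀ ξ : Fin n → Ed d,
        (∫ ω : Omega2 x y, Complex.exp (Complex.I *
            ((∑ i : Fin n, ⟪ξ i, evalAt ω.1 (ts ((i : ℕ) + 1))⟫ : ℝ) : ℂ)) ∂(Wt t))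
          = (((2 * π * t) ^ (-(d : ℝ) / 2) * Real.exp (-‖x - y‖ ^ 2 / (2 * t)) : ℝ) : ℂ) *
            Complex.exp
              (((-(t / 2) *
                  ((∑ i : Fin n,
                      (ts ((i : ℕ) + 1) - ts (i : ℕ)) * ‖∑ j ∈ Finset.Ici i, ξ j‖ ^ 2)
                    - ‖∑ i : Fin n, ts ((i : ℕ) + 1) • ξ i‖ ^ 2) : ℝ) : ℂ)
                + Complex.I *
                  ((∑ i : Fin n,
                    ⟪ξ i, (1 - ts ((i : ℕ) + 1)) • x + ts ((i : ℕ) + 1) • y⟫ : ℝ) : ℂ)))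

/-- The nearest-neighbour step in `ℤ^d` in direction `p.1`, with sign given by `p.2`. -/
def latStep {d : ℕ} (p : Fin d × Bool) : Fin d → ℤ := Pi.single p.1 (if p.2 then 1 else -1)

/-- One half of the Brillouin zone `[-π, π]^d`, obtained by halving the direction `i₀`. -/
def halfCell {d : ℕ} (i₀ : Fin d) : Set (Ed d) :=
  {θ | ∀ k, |θ k| ≤ if k = i₀ then π / 2 else π}

/-- The characteristic function of a single step of the simple random walk on `ℤ^d`. -/
def meanCos {d : ℕ} (u : Ed d) : ℝ := (∑ k, Real.cos (u k)) / d

lemma integral_cexp_int_symm {b : ℝ} (hb : 0 ≤ b) (n : ℤ) (hn : n ≠ 0)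
    (h : Real.sin (n * b) = 0) :
    ∫ t in Icc (-b) b, Complex.exp (Complex.I * (t * n)) = 0 := by
  rw [integral_Icc_eq_integral_Ioc, ← intervalIntegral.integral_of_le (by linarith)]
  have hc : Complex.I * (n : ℂ) ≠ 0 := by simp [hn]
  have h1 : ∀ t : ℝ, Complex.exp (Complex.I * (t * n)) = Complex.exp (Complex.I * n * t) := by
    intro t; congr 1; ring
  simp_rw [h1]
  rw [integral_exp_mul_complex hc, div_eq_zero_iff]
  left
  have h2 : Complex.sin ((n : ℂ) * b) = 0 := by exact_mod_cast congrArg Complex.ofReal h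
  have h3 := Complex.two_sin ((n : ℂ) * b)
  rw [h2] at h3
  have h4 : Complex.exp (-((n : ℂ) * b) * Complex.I) - Complex.exp ((n : ℂ) * b * Complex.I) =
      0 := by
    have := h3.symm
    simpa using this
  rw [← neg_eq_zero, ← h4]
  push_cast
  ring_nf

lemma integral_halfCell_prod {d : ℕ} (i₀ : Fin d) (f : Fin d → ℝ → ℂ) :
    ∫ θ in halfCell i₀, ∏ k, f k (θ k) =
      ∏ k, ∫ t in Icc (-(if k = i₀ then π / 2 else π)) (if k = i₀ then π / 2 else π), f k t := by
  have h := (PiLp.volume_preserving_toLp (Fin d)).setIntegral_preimage_emb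
    (MeasurableEquiv.toLp 2 _).measurableEmbedding (fun θ : Ed d => ∏ k, f k (θ k)) (halfCell i₀)
  rw [← h]
  have hs : (WithLp.toLp 2 ⁻¹' halfCell i₀ : Set (Fin d → ℝ)) =
      Set.pi univ fun k => Icc (-(if k = i₀ then π / 2 else π)) (if k = i₀ then π / 2 else π) := by
    ext θ
    simp only [halfCell, mem_preimage, mem_ofPred_eq, Set.mem_pi, mem_univ, true_imp_iff, abs_le,
      Set.mem_Icc]
  rw [hs, volume_pi, Measure.restrict_pi_pi]
  exact integral_fintype_prod_eq_prod (𝕜 := ℂ) f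

lemma measurableSet_halfCell {d : ℕ} (i₀ : Fin d) : MeasurableSet (halfCell i₀) := by
  have : halfCell i₀ = ⋂ k, {θ : Ed d | |θ k| ≤ if k = i₀ then π / 2 else π} := by
    ext; simp [halfCell]
  rw [this]
  refine (isClosed_iInter fun k => ?_).measurableSet
  exact isClosed_le (by fun_prop) continuous_const

lemma isCompact_halfCell {d : ℕ} (i₀ : Fin d) : IsCompact (halfCell i₀) := by
  have : halfCell i₀ = (EuclideanSpace.equiv (Fin d) ℝ).toHomeomorph ⁻¹'
      (Set.pi univ fun k =>
        Icc (-(if k = i₀ then π / 2 else π)) (if k = i₀ then π / 2 else π)) := by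
    ext θ
    simp only [halfCell, mem_preimage, mem_ofPred_eq, Set.mem_pi, mem_univ, true_imp_iff, abs_le,
      Set.mem_Icc]
    rfl
  rw [this, Homeomorph.isCompact_preimage]
  exact isCompact_univ_pi fun k => isCompact_Icc

/-- Orthogonality of characters on the half cell, for integer vectors with even coordinate sum. -/
lemma integral_halfCell_character {d : ℕ} (i₀ : Fin d) (v : Fin d → ℤ) (hv : Even (∑ k, v k)) :
    ∫ θ in halfCell i₀, Complex.exp (Complex.I * ∑ k, (θ k : ℂ) * v k) =
      if v = 0 then (((2 * π) ^ d / 2 : ℝ) : ℂ) else 0 := by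
  have h1 : ∀ θ : Ed d, Complex.exp (Complex.I * ∑ k, (θ k : ℂ) * v k) =
      ∏ k, Complex.exp (Complex.I * ((θ k : ℂ) * v k)) := by
    intro θ; rw [Finset.mul_sum, Complex.exp_sum]
  simp_rw [h1]
  rw [integral_halfCell_prod i₀ (fun k t => Complex.exp (Complex.I * ((t : ℂ) * v k)))]
  have hpi := Real.pi_pos
  split_ifs with h
  · subst h
    simp only [Pi.zero_apply, Int.cast_zero, mul_zero, Complex.exp_zero, integral_const,
      MeasurableSet.univ, measureReal_restrict_apply, univ_inter, volume_real_Icc]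
    have : ∀ k : Fin d, max ((if k = i₀ then π / 2 else π) - -(if k = i₀ then π / 2 else π)) 0
        = (2 * π) * (if k = i₀ then 1 / 2 else 1) := by
      intro k
      split_ifs <;> rw [max_eq_left] <;> linarith
    simp only [this]
    rw [← Complex.ofReal_one]
    simp only [Complex.real_smul, ← Complex.ofReal_mul, ← Complex.ofReal_prod]
    congr 1
    simp only [mul_one, Finset.prod_mul_distrib, Finset.prod_const, Finset.card_univ,
      Fintype.card_fin, Finset.prod_ite_eq', Finset.mem_univ, if_true]
    ring
  · by_cases h2 : ∃ k, k ≠ i₀ ∧ v k ≠ 0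
    · obtain ⟨k, hk, hvk⟩ := h2
      refine Finset.prod_eq_zero (Finset.mem_univ k) ?_
      simp only [if_neg hk]
      exact integral_cexp_int_symm hpi.le _ hvk (Real.sin_int_mul_pi _)
    · push Not at h2
      have hs : ∑ k, v k = v i₀ := Finset.sum_eq_single _ (fun k _ hk => h2 k hk) (by simp)
      have hne : v i₀ ≠ 0 := by
        intro h0
        apply h
        funext k
        by_cases hk : k = i₀
        · rw [hk, h0]; rfl
        · exact h2 k hk
      refine Finset.prod_eq_zero (Finset.mem_univ i₀) ?_
      simp only [if_true]
      refine integral_cexp_int_symm (by positivity) _ hne ?_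
      obtain ⟨r, hr⟩ := hs ▸ hv
      have : ((v i₀ : ℤ) : ℝ) * (π / 2) = r * π := by rw [hr]; push_cast; ring
      rw [this, Real.sin_int_mul_pi]

lemma sum_latStep {d : ℕ} (p : Fin d × Bool) : ∑ k, latStep p k = if p.2 then 1 else -1 := by
  simp [latStep]

lemma even_card_add_sum_latStep {d : ℕ} {ι : Type*} [Fintype ι] (s : ι → Fin d × Bool) :
    Even ((Fintype.card ι : ℤ) + ∑ k, (∑ i, latStep (s i)) k) := by
  simp only [Finset.sum_apply]
  rw [Finset.sum_comm]
  simp_rw [sum_latStep]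
  have : ((Fintype.card ι : ℤ)) = ∑ i : ι, 1 := by simp
  rw [this, ← Finset.sum_add_distrib]
  refine Finset.even_sum _ fun i _ => ?_
  split_ifs <;> decide

/-- Fourier representation of weighted counts of lattice paths with prescribed endpoint. -/
lemma sum_paths_eq_integral {d : ℕ} (i₀ : Fin d) {ι : Type*} [Fintype ι] [DecidableEq ι]
    (g : ι → Fin d × Bool → ℂ) (z : Fin d → ℤ) (hz : Even ((Fintype.card ι : ℤ) + ∑ k, z k)) :
    (∑ s : ι → Fin d × Bool, if ∑ i, latStep (s i) = z then ∏ i, g i (s i) else 0) =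
      ((2 / (2 * π) ^ d : ℝ) : ℂ) * ∫ θ in halfCell i₀,
        Complex.exp (-(Complex.I * ∑ k, (θ k : ℂ) * z k)) *
          ∏ i, ∑ p, g i p * Complex.exp (Complex.I * ∑ k, (θ k : ℂ) * latStep p k) := by
  have hexp : ∀ θ : Ed d, Complex.exp (-(Complex.I * ∑ k, (θ k : ℂ) * z k)) *
          ∏ i, ∑ p, g i p * Complex.exp (Complex.I * ∑ k, (θ k : ℂ) * latStep p k) =
      ∑ s : ι → Fin d × Bool, (∏ i, g i (s i)) *
        Complex.exp (Complex.I * ∑ k, (θ k : ℂ) * ((∑ i, latStep (s i) - z) k : ℤ)) := by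
    intro θ
    rw [Finset.prod_univ_sum, Fintype.piFinset_univ, Finset.mul_sum]
    refine Finset.sum_congr rfl fun s _ => ?_
    rw [Finset.prod_mul_distrib, ← Complex.exp_sum, mul_left_comm, ← Complex.exp_add]
    congr 2
    rw [← Finset.mul_sum, Finset.sum_comm, neg_add_eq_sub, ← mul_sub, ← Finset.sum_sub_distrib]
    congr 1
    refine Finset.sum_congr rfl fun k _ => ?_
    rw [← Finset.mul_sum, ← mul_sub]
    congr 1
    simp
  simp_rw [hexp]
  rw [integral_finsetSum _ fun s _ => ?_]
  · rw [Finset.mul_sum]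
    refine Finset.sum_congr rfl fun s _ => ?_
    rw [integral_const_mul, integral_halfCell_character]
    · simp only [sub_eq_zero]
      split_ifs
      · rw [mul_left_comm, ← Complex.ofReal_mul]
        rw [show 2 / (2 * π) ^ d * ((2 * π) ^ d / 2) = 1 by field_simp]
        simp
      · simp
    · have h1 := even_card_add_sum_latStep s
      have h2 := h1.sub hz
      simpa [Finset.sum_sub_distrib] using h2
  · exact ContinuousOn.integrableOn_compact (isCompact_halfCell i₀) (by fun_prop)

lemma sum_cexp_latStep {d : ℕ} (hd : 0 < d) (θ c : Ed d) (a : ℝ) :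
    ∑ p : Fin d × Bool, Complex.exp (Complex.I * (⟪c, stepVec a p⟫ : ℝ)) *
        Complex.exp (Complex.I * ∑ k, (θ k : ℂ) * latStep p k) =
      ((2 * d * meanCos (θ + a • c) : ℝ) : ℂ) := by
  have h1 : ∀ p : Fin d × Bool, Complex.exp (Complex.I * (⟪c, stepVec a p⟫ : ℝ)) *
        Complex.exp (Complex.I * ∑ k, (θ k : ℂ) * latStep p k) =
      Complex.exp ((if p.2 then 1 else -1 : ℂ) * ((θ p.1 + a * c p.1 : ℝ) : ℂ) * Complex.I) := by
    intro p
    rw [← Complex.exp_add]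
    congr 1
    have : ∑ k, (θ k : ℂ) * latStep p k = θ p.1 * (if p.2 then 1 else -1) := by
      rw [Finset.sum_eq_single p.1]
      · simp [latStep]
      · intro k _ hk; simp [latStep, hk]
      · simp
    rw [this, stepVec, inner_smul_right, EuclideanSpace.inner_single_right]
    rcases p with ⟨k, b⟩
    cases b <;> simp <;> ring
  simp_rw [h1]
  rw [Fintype.sum_prod_type]
  simp only [Fintype.sum_bool, if_true, one_mul]
  have h2 : (2 * d * meanCos (θ + a • c) : ℝ) = ∑ k, 2 * Real.cos (θ k + a * c k) := by
    rw [meanCos, ← Finset.mul_sum]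
    have : (d : ℝ) ≠ 0 := by positivity
    simp only [PiLp.add_apply, PiLp.smul_apply, smul_eq_mul]
    field_simp
  rw [h2, Complex.ofReal_sum]
  refine Finset.sum_congr rfl fun k _ => ?_
  rw [Complex.ofReal_mul, Complex.ofReal_cos, Complex.ofReal_ofNat, Complex.two_cos]
  simp

lemma one_sub_cos_ge {u : ℝ} (hu : |u| ≤ 3 * π / 2) : 4 / (9 * π ^ 2) * u ^ 2 ≤ 1 - Real.cos u := by
  have hpi := Real.pi_pos
  rcases le_total |u| π with h | h
  · have h1 := Real.cos_le_one_sub_mul_cos_sq h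
    have h2 : 4 / (9 * π ^ 2) ≤ 2 / π ^ 2 := by
      rw [div_le_div_iff₀ (by positivity) (by positivity)]
      nlinarith [sq_nonneg π]
    nlinarith [mul_le_mul_of_nonneg_right h2 (sq_nonneg u)]
  · have h1 : Real.cos u ≤ 0 := by
      rw [← Real.cos_abs]
      exact Real.cos_nonpos_of_pi_div_two_le_of_le (by linarith) (by linarith)
    have h2 : u ^ 2 ≤ (3 * π / 2) ^ 2 := by
      rw [← sq_abs]; gcongr
    have h3 : 4 / (9 * π ^ 2) * u ^ 2 ≤ 4 / (9 * π ^ 2) * (3 * π / 2) ^ 2 := by gcongr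
    have h4 : 4 / (9 * π ^ 2) * (3 * π / 2) ^ 2 = 1 := by field_simp; norm_num
    linarith

lemma abs_meanCos_le_one {d : ℕ} (u : Ed d) : |meanCos u| ≤ 1 := by
  rw [meanCos, abs_div, Nat.abs_cast]
  refine div_le_one_of_le₀ ?_ (Nat.cast_nonneg _)
  calc |∑ k, Real.cos (u k)| ≤ ∑ k : Fin d, |Real.cos (u k)| := Finset.abs_sum_le_sum_abs _ _
    _ ≤ ∑ k : Fin d, 1 := Finset.sum_le_sum fun k _ => Real.abs_cos_le_one _
    _ = d := by simp

/-- The Gaussian decay rate of `meanCos` near the half cell. -/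
def cosRate (d : ℕ) : ℝ := 2 / (9 * π ^ 2 * d ^ 2)

lemma cosRate_pos {d : ℕ} (hd : 0 < d) : 0 < cosRate d := by
  have := Real.pi_pos
  rw [cosRate]; positivity

lemma abs_meanCos_le {d : ℕ} (i₀ : Fin d) (u : Ed d) (h0 : |u i₀| ≤ 2 * π / 3)
    (hu : ∀ k, |u k| ≤ 3 * π / 2) : |meanCos u| ≤ Real.exp (-cosRate d * ‖u‖ ^ 2) := by
  have hpi := Real.pi_pos
  have hd : (1 : ℝ) ≤ d := by
    exact_mod_cast Nat.one_le_iff_ne_zero.mpr (fun h => by subst h; exact i₀.elim0)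
  have hd0 : (0 : ℝ) < d := by linarith
  have hn : ‖u‖ ^ 2 = ∑ k, (u k) ^ 2 := EuclideanSpace.real_norm_sq_eq u
  have hupper : meanCos u ≤ 1 - 4 / (9 * π ^ 2 * d) * ‖u‖ ^ 2 := by
    have h1 : ∑ k, 4 / (9 * π ^ 2) * (u k) ^ 2 ≤ ∑ k, (1 - Real.cos (u k)) :=
      Finset.sum_le_sum fun k _ => one_sub_cos_ge (hu k)
    rw [← Finset.mul_sum, ← hn, Finset.sum_sub_distrib] at h1
    simp only [Finset.sum_const, Finset.card_univ, Fintype.card_fin, nsmul_eq_mul, mul_one] at h1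
    rw [meanCos, div_le_iff₀ hd0]
    have : (1 - 4 / (9 * π ^ 2 * d) * ‖u‖ ^ 2) * d = d - 4 / (9 * π ^ 2) * ‖u‖ ^ 2 := by
      field_simp
    linarith
  have hlower : -(1 - 1 / (2 * d)) ≤ meanCos u := by
    have h1 : ∑ k : Fin d, (-1 + if k = i₀ then 1 / 2 else 0 : ℝ) ≤ ∑ k, Real.cos (u k) := by
      refine Finset.sum_le_sum fun k _ => ?_
      split_ifs with h
      · subst h
        have h2 : Real.cos (2 * π / 3) ≤ Real.cos |u k| :=
          Real.cos_le_cos_of_nonneg_of_le_pi (abs_nonneg _) (by linarith) h0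
        rw [Real.cos_abs, show 2 * π / 3 = π - π / 3 by ring, Real.cos_pi_sub,
          Real.cos_pi_div_three] at h2
        linarith
      · linarith [Real.neg_one_le_cos (u k)]
    rw [Finset.sum_add_distrib] at h1
    simp only [Finset.sum_const, Finset.card_univ, Fintype.card_fin, nsmul_eq_mul,
      Finset.sum_ite_eq', Finset.mem_univ, if_true] at h1
    rw [meanCos, le_div_iff₀ hd0]
    have : -(1 - 1 / (2 * (d : ℝ))) * d = -d + 1 / 2 := by field_simp; ring
    linarith
  have hu2 : ‖u‖ ^ 2 ≤ d * (3 * π / 2) ^ 2 := by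
    rw [hn]
    calc ∑ k, (u k) ^ 2 ≤ ∑ k : Fin d, (3 * π / 2) ^ 2 := by
          refine Finset.sum_le_sum fun k _ => ?_
          rw [← sq_abs]; gcongr; exact hu k
      _ = _ := by simp
  have hk1 : cosRate d * ‖u‖ ^ 2 ≤ 4 / (9 * π ^ 2 * d) * ‖u‖ ^ 2 := by
    gcongr
    rw [cosRate, div_le_div_iff₀ (by positivity) (by positivity)]
    nlinarith [mul_pos (mul_pos hpi hpi) hd0,
      mul_nonneg (mul_pos (mul_pos hpi hpi) hd0).le (sub_nonneg.2 hd)]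
  have hk2 : cosRate d * ‖u‖ ^ 2 ≤ 1 / (2 * d) := by
    calc cosRate d * ‖u‖ ^ 2 ≤ cosRate d * (d * (3 * π / 2) ^ 2) := by
          gcongr; rw [cosRate]; positivity
      _ = 1 / (2 * (d : ℝ)) := by rw [cosRate]; field_simp; norm_num
  have : |meanCos u| ≤ 1 - cosRate d * ‖u‖ ^ 2 := abs_le.2 ⟨by linarith, by linarith⟩
  refine this.trans ?_
  have := Real.add_one_le_exp (-cosRate d * ‖u‖ ^ 2)
  linarith

/-- Number of lattice paths, indexed by `ι`, with prescribed total displacement. -/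
def pathCount {d : ℕ} (ι : Type) [Fintype ι] [DecidableEq ι] (z : Fin d → ℤ) : ℝ :=
  ∑ s : ι → Fin d × Bool, if ∑ i, latStep (s i) = z then 1 else 0

lemma integrable_exp_neg_mul_norm_sq {d : ℕ} {b : ℝ} (hb : 0 < b) :
    Integrable fun v : Ed d => Real.exp (-b * ‖v‖ ^ 2) := by
  have h := GaussianFourier.integrable_cexp_neg_mul_sq_norm_add (V := Ed d) (b := b)
    (by simpa using hb) 0 0
  have h2 := h.norm
  refine h2.congr (Eventually.of_forall fun v => ?_)
  simp only [Complex.norm_exp]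
  congr 1
  simp [← Complex.ofReal_pow]

lemma halfCell_bounds {d : ℕ} {i₀ : Fin d} {θ : Ed d} (hθ : θ ∈ halfCell i₀) :
    |θ i₀| ≤ π / 2 ∧ ∀ k, |θ k| ≤ π := by
  have hpi := Real.pi_pos
  have h1 := hθ i₀
  rw [if_pos rfl] at h1
  refine ⟨h1, fun k => (hθ k).trans ?_⟩
  split_ifs <;> linarith

/-- Local limit upper bound for the simple random walk. -/
lemma exists_pathCount_le {d : ℕ} (i₀ : Fin d) : ∃ C : ℝ, 0 < C ∧
    ∀ (ι : Type) [Fintype ι] [DecidableEq ι] (z : Fin d → ℤ),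
      pathCount ι z ≤ C * ((Fintype.card ι : ℝ) + 1) ^ (-(d : ℝ) / 2) *
        (2 * d : ℝ) ^ Fintype.card ι := by
  have hpi := Real.pi_pos
  have hd : 0 < d := Fin.pos i₀
  have hκ := cosRate_pos hd
  refine ⟨1 + 2 / (2 * π) ^ d * (2 * π / cosRate d) ^ ((d : ℝ) / 2), by positivity, ?_⟩
  intro ι _ _ z
  by_cases hz : Even ((Fintype.card ι : ℤ) + ∑ k, z k)
  swap
  · have : pathCount ι z = 0 := by
      refine Finset.sum_eq_zero fun s _ => if_neg fun h => hz ?_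
      rw [← h]; exact even_card_add_sum_latStep s
    rw [this]; positivity
  rcases Nat.eq_zero_or_pos (Fintype.card ι) with h0 | hn
  · have : IsEmpty ι := Fintype.card_eq_zero_iff.1 h0
    have h1 : pathCount ι z ≤ 1 := by
      rw [pathCount, Fintype.sum_unique]
      split_ifs <;> norm_num
    rw [h0]
    simp only [Nat.cast_zero, zero_add, Real.one_rpow, mul_one, pow_zero]
    have : 0 ≤ 2 / (2 * π) ^ d * (2 * π / cosRate d) ^ ((d : ℝ) / 2) := by positivity
    linarith
  set n := Fintype.card ι with hn_def
  have hF := sum_paths_eq_integral i₀ (fun (_ : ι) _ => (1 : ℂ)) z hz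
  have hstep : ∀ θ : Ed d, ∑ p : Fin d × Bool, (1 : ℂ) *
      Complex.exp (Complex.I * ∑ k, (θ k : ℂ) * latStep p k) = ((2 * d * meanCos θ : ℝ) : ℂ) := by
    intro θ
    have := sum_cexp_latStep hd θ 0 0
    simpa using this
  simp only [hstep, Finset.prod_const_one, Finset.prod_const, Finset.card_univ] at hF
  rw [← hn_def] at hF
  have hcast : ((pathCount ι z : ℝ) : ℂ) = ∑ s : ι → Fin d × Bool,
      if ∑ i, latStep (s i) = z then (1 : ℂ) else 0 := by
    rw [pathCount, Complex.ofReal_sum]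
    refine Finset.sum_congr rfl fun s _ => ?_
    split_ifs <;> simp
  rw [← hcast] at hF
  have hnn : 0 ≤ pathCount ι z := Finset.sum_nonneg fun s _ => by split_ifs <;> norm_num
  have hnorm : pathCount ι z = ‖((pathCount ι z : ℝ) : ℂ)‖ := by
    rw [Complex.norm_real, Real.norm_of_nonneg hnn]
  have hnpos : (0 : ℝ) < n := by exact_mod_cast hn
  have hgauss : ‖∫ θ in halfCell i₀, Complex.exp (-(Complex.I * ∑ k, (θ k : ℂ) * z k)) *
      ((2 * d * meanCos θ : ℝ) : ℂ) ^ n‖ ≤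
      (2 * d : ℝ) ^ n * (π / (cosRate d * n)) ^ ((d : ℝ) / 2) := by
    calc _ ≤ ∫ θ in halfCell i₀, (2 * d : ℝ) ^ n * Real.exp (-(cosRate d * n) * ‖θ‖ ^ 2) := by
          refine norm_integral_le_of_norm_le ?_ ?_
          · exact ((integrable_exp_neg_mul_norm_sq (by positivity)).const_mul _).integrableOn
          · refine (ae_restrict_iff' (measurableSet_halfCell i₀)).2 (Eventually.of_forall ?_)
            intro θ hθ
            obtain ⟨h1, h2⟩ := halfCell_bounds hθ
            have hre : ‖Complex.exp (-(Complex.I * ∑ k, (θ k : ℂ) * z k))‖ = 1 := by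
              have : -(Complex.I * ∑ k, (θ k : ℂ) * z k) =
                  ((-(∑ k, θ k * z k) : ℝ) : ℂ) * Complex.I := by push_cast; ring
              rw [this, Complex.norm_exp_ofReal_mul_I]
            rw [norm_mul, hre, one_mul, norm_pow, Complex.norm_real, Real.norm_eq_abs, abs_mul,
              mul_pow, abs_of_nonneg (by positivity : (0 : ℝ) ≤ 2 * d)]
            gcongr
            calc |meanCos θ| ^ n ≤ (Real.exp (-cosRate d * ‖θ‖ ^ 2)) ^ n := by
                  gcongr
                  exact abs_meanCos_le i₀ θ (h1.trans (by linarith))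
                    fun k => (h2 k).trans (by linarith)
              _ = _ := by rw [← Real.exp_nat_mul]; congr 1; ring
      _ ≤ ∫ θ : Ed d, (2 * d : ℝ) ^ n * Real.exp (-(cosRate d * n) * ‖θ‖ ^ 2) := by
          refine setIntegral_le_integral
            ((integrable_exp_neg_mul_norm_sq (by positivity)).const_mul _) ?_
          exact Eventually.of_forall fun θ => by simp only [Pi.zero_apply]; positivity
      _ = _ := by
          rw [integral_const_mul, GaussianFourier.integral_rexp_neg_mul_sq_norm (by positivity)]
          simp
  have hpow : (π / (cosRate d * n)) ^ ((d : ℝ) / 2) ≤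
      (2 * π / cosRate d) ^ ((d : ℝ) / 2) * ((n : ℝ) + 1) ^ (-(d : ℝ) / 2) := by
    rw [neg_div, Real.rpow_neg (by positivity), ← Real.inv_rpow (by positivity),
      ← Real.mul_rpow (by positivity) (by positivity)]
    refine Real.rpow_le_rpow (by positivity) ?_ (by positivity)
    rw [← div_eq_mul_inv, div_div, div_le_div_iff₀ (by positivity) (by positivity)]
    have h1 : (1 : ℝ) ≤ n := by exact_mod_cast hn
    nlinarith [mul_nonneg (mul_pos hpi hκ).le (sub_nonneg.2 h1)]
  rw [hnorm, hF, norm_mul, Complex.norm_real, Real.norm_of_nonneg (by positivity)]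
  calc _ ≤ 2 / (2 * π) ^ d * ((2 * d : ℝ) ^ n * ((2 * π / cosRate d) ^ ((d : ℝ) / 2) *
        ((n : ℝ) + 1) ^ (-(d : ℝ) / 2))) := by
        gcongr
        exact hgauss.trans (by gcongr)
    _ = (0 + 2 / (2 * π) ^ d * (2 * π / cosRate d) ^ ((d : ℝ) / 2)) *
        ((n : ℝ) + 1) ^ (-(d : ℝ) / 2) * (2 * d : ℝ) ^ n := by ring
    _ ≤ _ := by gcongr; norm_num

/-- The constant in the local limit upper bound. -/
def lltConst {d : ℕ} (i₀ : Fin d) : ℝ := (exists_pathCount_le i₀).choose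

lemma lltConst_pos {d : ℕ} (i₀ : Fin d) : 0 < lltConst i₀ := (exists_pathCount_le i₀).choose_spec.1

lemma pathCount_le {d : ℕ} (i₀ : Fin d) (ι : Type) [Fintype ι] [DecidableEq ι] (z : Fin d → ℤ) :
    pathCount ι z ≤ lltConst i₀ * ((Fintype.card ι : ℝ) + 1) ^ (-(d : ℝ) / 2) *
        (2 * d : ℝ) ^ Fintype.card ι := (exists_pathCount_le i₀).choose_spec.2 ι z

/-- Conditioning on the endpoint costs at most a factor given by the local limit bound for the
steps which are not observed. -/
lemma sum_pinned_le {d : ℕ} (i₀ : Fin d) {M N : ℕ} (g : Fin M → Fin N)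
    (hg : Function.Injective g) (F : (Fin M → Fin d × Bool) → ℝ) (hF : ∀ u, 0 ≤ F u)
    (z : Fin d → ℤ) :
    (∑ s : Fin N → Fin d × Bool, if ∑ i, latStep (s i) = z then F (s ∘ g) else 0) ≤
      (∑ u, F u) * (lltConst i₀ * (((N - M : ℕ) : ℝ) + 1) ^ (-(d : ℝ) / 2) *
        (2 * d : ℝ) ^ (N - M)) := by
  classical
  let ρ := {k // k ∉ Set.range g}
  let e : Fin M ⊕ ρ ≃ Fin N :=
    (Equiv.sumCongr (Equiv.ofInjective g hg) (Equiv.refl _)).trans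
      (Equiv.Set.sumCompl (Set.range g))
  have hel : ∀ i, e (Sum.inl i) = g i := fun i => rfl
  have hcard : Fintype.card ρ = N - M := by
    have := Fintype.card_congr e
    rw [Fintype.card_sum, Fintype.card_fin, Fintype.card_fin] at this
    omega
  let E : (Fin N → Fin d × Bool) ≃ (Fin M → Fin d × Bool) × (ρ → Fin d × Bool) :=
    (Equiv.arrowCongr e.symm (Equiv.refl _)).trans (Equiv.sumArrowEquivProdArrow _ _ _)
  have h1 : (∑ s : Fin N → Fin d × Bool, if ∑ i, latStep (s i) = z then F (s ∘ g) else 0) =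
      ∑ q : (Fin M → Fin d × Bool) × (ρ → Fin d × Bool),
        if ∑ i, latStep (q.1 i) + ∑ i, latStep (q.2 i) = z then F q.1 else 0 := by
    refine Fintype.sum_equiv E _ _ fun s => ?_
    have hE1 : (E s).1 = s ∘ g := by
      funext i
      simp [E, Equiv.sumArrowEquivProdArrow, hel]
    have hsum : ∑ i, latStep (s i) = ∑ i, latStep ((E s).1 i) + ∑ i, latStep ((E s).2 i) := by
      rw [← Equiv.sum_comp e, Fintype.sum_sum_type]
      rfl
    rw [hsum, hE1]
  rw [h1, Fintype.sum_prod_type, Finset.sum_mul]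
  refine Finset.sum_le_sum fun u _ => ?_
  have h2 : (∑ w : ρ → Fin d × Bool,
      if ∑ i, latStep (u i) + ∑ i, latStep (w i) = z then F u else 0) =
      F u * pathCount ρ (z - ∑ i, latStep (u i)) := by
    rw [pathCount, Finset.mul_sum]
    refine Finset.sum_congr rfl fun w _ => ?_
    simp only [eq_sub_iff_add_eq', mul_ite, mul_one, mul_zero]
  simp only
  rw [h2]
  refine mul_le_mul_of_nonneg_left ?_ (hF u)
  have := pathCount_le i₀ ρ (z - ∑ i, latStep (u i))
  rwa [hcard] at this

/-- Exponential maximal inequality for counts of walks. -/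
lemma sum_exists_partialSum_ge_le {P : Type*} [Fintype P] (h : P → ℝ) {l : ℝ} (hl : 0 ≤ l)
    (hZ : (Fintype.card P : ℝ) ≤ ∑ p, Real.exp (l * h p)) (M : ℕ) :
    ∀ R : ℝ, (∑ u : Fin M → P, open Classical in
      if ∃ n ≤ M, R ≤ ∑ i : Fin M, (if (i : ℕ) < n then h (u i) else 0) then (1 : ℝ) else 0) ≤
      Real.exp (-(l * R)) * (∑ p, Real.exp (l * h p)) ^ M := by
  classical
  have hZ0 : (0 : ℝ) ≤ ∑ p, Real.exp (l * h p) := Finset.sum_nonneg fun p _ => (Real.exp_pos _).le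
  induction M with
  | zero =>
    intro R
    rw [Fintype.sum_unique]
    split_ifs with hR
    · obtain ⟨n, _, hn⟩ := hR
      simp only [Finset.univ_eq_empty, Finset.sum_empty] at hn
      rw [pow_zero, mul_one]
      exact Real.one_le_exp (by nlinarith)
    · positivity
  | succ M ih =>
    intro R
    rcases le_or_gt R 0 with hR | hR
    · calc _ ≤ ∑ u : Fin (M + 1) → P, (1 : ℝ) := by
            refine Finset.sum_le_sum fun u _ => ?_
            split_ifs <;> norm_num
        _ = (Fintype.card P : ℝ) ^ (M + 1) := by simp
        _ ≤ (∑ p, Real.exp (l * h p)) ^ (M + 1) := by gcongr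
        _ ≤ _ := by
            refine le_mul_of_one_le_left (by positivity) (Real.one_le_exp (by nlinarith))
    · rw [← (Fin.consEquiv fun _ => P).sum_comp, Fintype.sum_prod_type]
      calc _ ≤ ∑ p, ∑ u : Fin M → P, (if ∃ n ≤ M, R - h p ≤
              ∑ i : Fin M, (if (i : ℕ) < n then h (u i) else 0) then (1 : ℝ) else 0) := by
            refine Finset.sum_le_sum fun p _ => Finset.sum_le_sum fun u _ => ?_
            split_ifs with h1 h2
            · exact le_rfl
            · exfalso
              apply h2
              obtain ⟨n, hn, hs⟩ := h1
              rw [Fin.sum_univ_succ] at hs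
              simp only [Fin.consEquiv_apply, Fin.cons_zero, Fin.cons_succ, Fin.val_zero,
                Fin.val_succ] at hs
              rcases n with _ | n
              · simp at hs; linarith
              · refine ⟨n, by omega, ?_⟩
                simp only [Nat.zero_lt_succ, if_true, Nat.add_lt_add_iff_right] at hs
                linarith
            · norm_num
            · exact le_rfl
        _ ≤ ∑ p, Real.exp (-(l * (R - h p))) * (∑ p, Real.exp (l * h p)) ^ M :=
            Finset.sum_le_sum fun p _ => ih _
        _ = _ := by
            rw [← Finset.sum_mul, pow_succ', ← mul_assoc, Finset.mul_sum]
            congr 1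
            refine Finset.sum_congr rfl fun p _ => ?_
            rw [← Real.exp_add]; congr 1; ring

lemma sum_exp_latStep {d : ℕ} (c : Fin d) (l : ℝ) :
    ∑ p : Fin d × Bool, Real.exp (l * latStep p c) = 2 * (d - 1) + 2 * Real.cosh l := by
  have h : ∀ k : Fin d, ∑ b : Bool, Real.exp (l * latStep (k, b) c) =
      2 + if k = c then 2 * Real.cosh l - 2 else 0 := by
    intro k
    rw [Fintype.sum_bool]
    split_ifs with h
    · subst h
      simp [latStep, Real.cosh_eq]; ring
    · have h' : c ≠ k := fun e => h e.symm
      simp [latStep, h']; norm_num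
  rw [Fintype.sum_prod_type]
  simp_rw [h]
  rw [Finset.sum_add_distrib]
  simp; ring

/-- The event that a partial sum of the lattice walk `u` has a coordinate of size at least `R`. -/
def LargeExcursion {d M : ℕ} (R : ℝ) (u : Fin M → Fin d × Bool) : Prop :=
  ∃ n ≤ M, ∃ c, R ≤ |∑ i : Fin M, if (i : ℕ) < n then (latStep (u i) c : ℝ) else 0|

open Classical in
lemma sum_largeExcursion_le {d M : ℕ} (hd : 0 < d) {R L : ℝ} (hR : 0 ≤ R) (hL : 0 < L)
    (hML : (M : ℝ) ≤ L) :
    (∑ u : Fin M → Fin d × Bool, if LargeExcursion R u then (1 : ℝ) else 0) ≤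
      2 * d * Real.exp (-(R ^ 2 / (2 * L))) * (2 * d : ℝ) ^ M := by
  have hd' : (0 : ℝ) < d := by exact_mod_cast hd
  have hone : ∀ (c : Fin d) (sg : ℝ), (sg = 1 ∨ sg = -1) →
      (∑ u : Fin M → Fin d × Bool, if ∃ n ≤ M, R ≤ ∑ i : Fin M,
        (if (i : ℕ) < n then sg * latStep (u i) c else 0) then (1 : ℝ) else 0) ≤
      Real.exp (-(R ^ 2 / (2 * L))) * (2 * d : ℝ) ^ M := by
    intro c sg hsg
    have hl : 0 ≤ R / L := by positivity
    have hsum : ∑ p : Fin d × Bool, Real.exp (R / L * (sg * latStep p c)) =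
        2 * (d - 1) + 2 * Real.cosh (R / L) := by
      rcases hsg with rfl | rfl
      · simp_rw [one_mul]; exact sum_exp_latStep c _
      · rw [← Real.cosh_neg, ← sum_exp_latStep c]
        refine Finset.sum_congr rfl fun p _ => ?_
        congr 1; ring
    have hcosh := Real.one_le_cosh (R / L)
    have hZ : (Fintype.card (Fin d × Bool) : ℝ) ≤
        ∑ p : Fin d × Bool, Real.exp (R / L * (sg * latStep p c)) := by
      rw [hsum]; simp; linarith
    refine (sum_exists_partialSum_ge_le
      (fun p : Fin d × Bool => sg * latStep p c) hl hZ M R).trans ?_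
    rw [hsum]
    have hd1 : (1 : ℝ) ≤ d := by exact_mod_cast hd
    have h1 : 2 * ((d : ℝ) - 1) + 2 * Real.cosh (R / L) ≤ 2 * d * Real.exp ((R / L) ^ 2 / 2) := by
      have h2 := Real.cosh_le_exp_half_sq (R / L)
      nlinarith [mul_nonneg (sub_nonneg.2 hd1) (sub_nonneg.2 hcosh)]
    calc _ ≤ Real.exp (-(R / L * R)) * (2 * d * Real.exp ((R / L) ^ 2 / 2)) ^ M := by
          gcongr
      _ = Real.exp (-(R / L * R) + M * ((R / L) ^ 2 / 2)) * (2 * d : ℝ) ^ M := by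
          rw [mul_pow, ← Real.exp_nat_mul, Real.exp_add]; ring
      _ ≤ _ := by
          gcongr
          calc -(R / L * R) + M * ((R / L) ^ 2 / 2) ≤ -(R / L * R) + L * ((R / L) ^ 2 / 2) := by
                gcongr
            _ = -(R ^ 2 / (2 * L)) := by field_simp; ring
  calc _ ≤ ∑ u : Fin M → Fin d × Bool, ∑ c : Fin d,
        ((if ∃ n ≤ M, R ≤ ∑ i : Fin M,
          (if (i : ℕ) < n then 1 * (latStep (u i) c : ℝ) else 0) then (1 : ℝ) else 0) +
        (if ∃ n ≤ M, R ≤ ∑ i : Fin M,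
          (if (i : ℕ) < n then -1 * (latStep (u i) c : ℝ) else 0) then (1 : ℝ) else 0)) := by
        refine Finset.sum_le_sum fun u _ => ?_
        have hnn : ∀ c : Fin d, (0 : ℝ) ≤ ((if ∃ n ≤ M, R ≤ ∑ i : Fin M,
          (if (i : ℕ) < n then 1 * (latStep (u i) c : ℝ) else 0) then (1 : ℝ) else 0) +
        (if ∃ n ≤ M, R ≤ ∑ i : Fin M,
          (if (i : ℕ) < n then -1 * (latStep (u i) c : ℝ) else 0) then (1 : ℝ) else 0)) := by
          intro c; split_ifs <;> norm_num
        split_ifs with hE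
        · obtain ⟨n, hn, c, hc⟩ := hE
          refine le_trans ?_ (Finset.single_le_sum (fun c _ => hnn c) (Finset.mem_univ c))
          rcases le_abs'.1 hc with h | h
          · rw [if_pos (c := ∃ n ≤ M, R ≤ ∑ i : Fin M,
              (if (i : ℕ) < n then -1 * (latStep (u i) c : ℝ) else 0))]
            · split_ifs <;> norm_num
            · refine ⟨n, hn, ?_⟩
              have : ∑ i : Fin M, (if (i : ℕ) < n then -1 * (latStep (u i) c : ℝ) else 0) =
                  -∑ i : Fin M, (if (i : ℕ) < n then (latStep (u i) c : ℝ) else 0) := by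
                rw [← Finset.sum_neg_distrib]
                refine Finset.sum_congr rfl fun i _ => ?_
                split_ifs <;> simp
              rw [this]; linarith
          · rw [if_pos (c := ∃ n ≤ M, R ≤ ∑ i : Fin M,
              (if (i : ℕ) < n then 1 * (latStep (u i) c : ℝ) else 0))]
            · split_ifs <;> norm_num
            · refine ⟨n, hn, ?_⟩
              simpa only [one_mul] using h
        · exact Finset.sum_nonneg fun c _ => hnn c
    _ = ∑ c : Fin d, _ := Finset.sum_comm
    _ ≤ ∑ c : Fin d, (2 * (Real.exp (-(R ^ 2 / (2 * L))) * (2 * d : ℝ) ^ M)) := by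
        refine Finset.sum_le_sum fun c _ => ?_
        rw [Finset.sum_add_distrib, two_mul]
        exact add_le_add (hone c 1 (Or.inl rfl)) (hone c (-1) (Or.inr rfl))
    _ = _ := by simp; ring

lemma rpow_neg_mul_exp_neg_le (d : ℕ) {c τ : ℝ} (hc : 0 < c) (hτ : 0 < τ) :
    τ ^ (-(d : ℝ) / 2) * Real.exp (-(c / τ)) ≤ 1 + d.factorial / c ^ d := by
  have hx : 0 < τ⁻¹ := by positivity
  have h1 : τ ^ (-(d : ℝ) / 2) ≤ 1 + (τ⁻¹) ^ d := by
    rw [neg_div, Real.rpow_neg hτ.le, ← Real.inv_rpow hτ.le]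
    rcases le_total τ⁻¹ 1 with h | h
    · have := Real.rpow_le_one hx.le h (by positivity : (0 : ℝ) ≤ (d : ℝ) / 2)
      have h2 : 0 ≤ (τ⁻¹) ^ d := by positivity
      linarith
    · have : (τ⁻¹) ^ ((d : ℝ) / 2) ≤ (τ⁻¹) ^ (d : ℝ) :=
        Real.rpow_le_rpow_of_exponent_le h (by linarith [(Nat.cast_nonneg d : (0 : ℝ) ≤ d)])
      rw [Real.rpow_natCast] at this
      linarith
  have h2 : (c / τ) ^ d ≤ d.factorial * Real.exp (c / τ) := by
    have := Real.pow_div_factorial_le_exp (c / τ) (by positivity) d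
    rwa [div_le_iff₀ (by positivity), mul_comm] at this
  have h3 : (τ⁻¹) ^ d ≤ d.factorial / c ^ d * Real.exp (c / τ) := by
    have : (τ⁻¹) ^ d = (c / τ) ^ d / c ^ d := by
      rw [div_pow, inv_pow]; field_simp
    rw [this, div_le_iff₀ (by positivity)]
    calc _ ≤ _ := h2
      _ = _ := by field_simp
  calc _ ≤ (1 + (τ⁻¹) ^ d) * Real.exp (-(c / τ)) := by gcongr
    _ ≤ (1 + d.factorial / c ^ d * Real.exp (c / τ)) * Real.exp (-(c / τ)) := by gcongr
    _ = Real.exp (-(c / τ)) + d.factorial / c ^ d := by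
        rw [add_mul, one_mul, mul_assoc, ← Real.exp_add]; simp
    _ ≤ _ := by
        gcongr
        exact Real.exp_le_one_iff.2 (neg_nonpos.2 (by positivity))

/-- Uniform bound for the rescaled transition probabilities away from the diagonal. -/
lemma exists_density_le {d : ℕ} (c : Fin d) {r : ℝ} (hr : 0 < r) : ∃ K : ℝ, 0 < K ∧
    ∀ (a : ℝ) (N : ℕ) (z : Fin d → ℤ), 0 < a → r ≤ a * |(z c : ℝ)| →
      a ^ (-(d : ℝ)) * ((2 * d : ℝ) ^ N)⁻¹ * pathCount (Fin N) z ≤ K := by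
  classical
  have hd : 0 < d := Fin.pos c
  have hd' : (0 : ℝ) < d := by exact_mod_cast hd
  have hC := lltConst_pos c
  refine ⟨4 * d * lltConst c * (1 + d.factorial / (r ^ 2 / 16) ^ d), by positivity, ?_⟩
  intro a N z ha hz
  have hz0 : z ≠ 0 := by
    rintro rfl
    simp at hz
    linarith
  rcases Nat.eq_zero_or_pos N with rfl | hN
  · have : pathCount (Fin 0) z = 0 := by
      rw [pathCount, Fintype.sum_unique, if_neg]
      simpa using hz0.symm
    rw [this, mul_zero]; positivity
  have hN' : (0 : ℝ) < N := by exact_mod_cast hN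
  set R : ℝ := |(z c : ℝ)| / 2 with hRdef
  have hR : r / (2 * a) ≤ R := by
    rw [hRdef, div_le_div_iff₀ (by positivity) (by positivity)]; linarith
  have hR0 : 0 ≤ R := by positivity
  have hblock : ∀ (M : ℕ) (g : Fin M → Fin N), Function.Injective g →
      (N : ℝ) / 2 ≤ (N - M : ℕ) + 1 →
      M ≤ N → (∑ s : Fin N → Fin d × Bool, if ∑ i, latStep (s i) = z then
        (if LargeExcursion R (s ∘ g) then (1 : ℝ) else 0) else 0) ≤
      2 * d * lltConst c * ((N : ℝ) / 2) ^ (-(d : ℝ) / 2) * Real.exp (-(R ^ 2 / (2 * N))) *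
        (2 * d : ℝ) ^ N := by
    intro M g hg hM hMN
    refine (sum_pinned_le c g hg (fun u => if LargeExcursion R u then (1 : ℝ) else 0)
      (fun u => by split_ifs <;> norm_num) z).trans ?_
    calc _ ≤ (2 * d * Real.exp (-(R ^ 2 / (2 * N))) * (2 * d : ℝ) ^ M) *
          (lltConst c * ((N : ℝ) / 2) ^ (-(d : ℝ) / 2) * (2 * d : ℝ) ^ (N - M)) := by
          have h1 := sum_largeExcursion_le (d := d) (M := M) hd hR0 hN' (by exact_mod_cast hMN)
          have h2 : (((N - M : ℕ) : ℝ) + 1) ^ (-(d : ℝ) / 2) ≤ ((N : ℝ) / 2) ^ (-(d : ℝ) / 2) :=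
            Real.rpow_le_rpow_of_nonpos (by positivity) hM (by linarith)
          gcongr
      _ = 2 * d * lltConst c * ((N : ℝ) / 2) ^ (-(d : ℝ) / 2) * Real.exp (-(R ^ 2 / (2 * N))) *
          ((2 * d : ℝ) ^ M * (2 * d : ℝ) ^ (N - M)) := by ring
      _ = _ := by rw [← pow_add, Nat.add_sub_cancel' hMN]
  set n₁ := N / 2
  have hn₁ : n₁ ≤ N := Nat.div_le_self _ _
  let g₁ : Fin n₁ → Fin N := fun i => ⟨i, by omega⟩
  let g₂ : Fin (N - n₁) → Fin N := fun i => ⟨n₁ + i, by omega⟩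
  have hg₁ : Function.Injective g₁ := fun i j h => by
    simp only [g₁, Fin.mk.injEq] at h; exact Fin.ext h
  have hg₂ : Function.Injective g₂ := fun i j h => by
    simp only [g₂, Fin.mk.injEq] at h; exact Fin.ext (by omega)
  have hb₁ := hblock n₁ g₁ hg₁ (by
    rw [div_le_iff₀ (by norm_num)]
    have : N ≤ (N - n₁ + 1) * 2 := by omega
    exact_mod_cast this) hn₁
  have hb₂ := hblock (N - n₁) g₂ hg₂ (by
    rw [div_le_iff₀ (by norm_num)]
    have : N ≤ (N - (N - n₁) + 1) * 2 := by omega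
    exact_mod_cast this) (by omega)
  have hcount : pathCount (Fin N) z ≤
      2 * (2 * d * lltConst c * ((N : ℝ) / 2) ^ (-(d : ℝ) / 2) * Real.exp (-(R ^ 2 / (2 * N))) *
        (2 * d : ℝ) ^ N) := by
    rw [two_mul]
    refine le_trans ?_ (add_le_add hb₁ hb₂)
    rw [pathCount, ← Finset.sum_add_distrib]
    refine Finset.sum_le_sum fun s _ => ?_
    split_ifs with h0 h1 h2 h2 <;> try norm_num
    have e₁ : |∑ i : Fin n₁, (latStep (s (g₁ i)) c : ℝ)| < R := by
      by_contra hcon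
      push Not at hcon
      refine h1 ⟨n₁, le_rfl, c, ?_⟩
      simpa using hcon
    have e₂ : |∑ i : Fin (N - n₁), (latStep (s (g₂ i)) c : ℝ)| < R := by
      by_contra hcon
      push Not at hcon
      refine h2 ⟨N - n₁, le_rfl, c, ?_⟩
      simpa using hcon
    have e₃ : (z c : ℝ) = ∑ i : Fin n₁, (latStep (s (g₁ i)) c : ℝ) +
        ∑ i : Fin (N - n₁), (latStep (s (g₂ i)) c : ℝ) := by
      rw [← h0, Finset.sum_apply, Int.cast_sum]
      have hsplit : N = n₁ + (N - n₁) := by omega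
      rw [← Equiv.sum_comp (finCongr hsplit).symm, Fin.sum_univ_add]
      rfl
    have e₄ : |(z c : ℝ)| < 2 * R := by
      rw [e₃]
      exact (abs_add_le _ _).trans_lt (by linarith)
    rw [hRdef] at e₄
    linarith
  have hexp : Real.exp (-(R ^ 2 / (2 * N))) ≤ Real.exp (-(r ^ 2 / 16 / (a ^ 2 * N / 2))) := by
    refine Real.exp_le_exp.2 (neg_le_neg ?_)
    calc r ^ 2 / 16 / (a ^ 2 * N / 2) = (r / (2 * a)) ^ 2 / (2 * N) := by field_simp; norm_num
      _ ≤ _ := by gcongr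
  have hrpow : a ^ (-(d : ℝ)) * ((N : ℝ) / 2) ^ (-(d : ℝ) / 2) =
      (a ^ 2 * N / 2) ^ (-(d : ℝ) / 2) := by
    rw [mul_div_assoc, Real.mul_rpow (by positivity) (by positivity)]
    congr 1
    rw [← Real.rpow_natCast a 2, ← Real.rpow_mul ha.le]
    congr 1; push_cast; ring
  calc _ ≤ a ^ (-(d : ℝ)) * ((2 * d : ℝ) ^ N)⁻¹ *
        (2 * (2 * d * lltConst c * ((N : ℝ) / 2) ^ (-(d : ℝ) / 2) *
          Real.exp (-(r ^ 2 / 16 / (a ^ 2 * N / 2))) * (2 * d : ℝ) ^ N)) := by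
        refine mul_le_mul_of_nonneg_left (hcount.trans ?_) (by positivity)
        gcongr
    _ = 4 * d * lltConst c * ((a ^ (-(d : ℝ)) * ((N : ℝ) / 2) ^ (-(d : ℝ) / 2)) *
          Real.exp (-(r ^ 2 / 16 / (a ^ 2 * N / 2)))) := by field_simp; norm_num
    _ ≤ _ := by
        rw [hrpow]
        gcongr
        exact rpow_neg_mul_exp_neg_le d (by positivity) (by positivity)

section

variable {d : ℕ}

lemma stepVec_apply (a : ℝ) (p : Fin d × Bool) (k : Fin d) :
    stepVec a p k = a * (latStep p k : ℝ) := by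
  rcases p with ⟨c, b⟩
  cases b <;> by_cases hk : k = c <;> simp [stepVec, latStep, hk]

lemma sum_stepVec_eq_iff {ι : Type*} [Fintype ι] {x y : Ed d} {a : ℝ} (ha : a ≠ 0)
    {z : Fin d → ℤ} (hz : ∀ k, (y - x) k = a * z k) (s : ι → Fin d × Bool) :
    x + ∑ i, stepVec a (s i) = y ↔ ∑ i, latStep (s i) = z := by
  have hsum : ∀ k, (∑ i, stepVec a (s i)) k = a * ((∑ i, latStep (s i)) k : ℤ) := by
    intro k
    simp [stepVec_apply, Finset.mul_sum]
  constructor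
  · intro h
    ext k
    have h1 := hz k
    rw [← h, add_sub_cancel_left, hsum] at h1
    exact_mod_cast mul_left_cancel₀ ha h1
  · intro h
    ext k
    have h1 := hz k
    have h2 := hsum k
    rw [h, ← h1] at h2
    rw [PiLp.add_apply, h2, PiLp.sub_apply]
    ring

instance (x y : Ed d) (a : ℝ) (N : ℕ) [NeZero d] : IsFiniteMeasure (VxyaN x y a N) := by
  rw [VxyaN, Measure.sum_fintype]
  have hd : ((2 * d : ℕ) : ℝ≥0∞) ^ N ≠ 0 := by simp [NeZero.ne d]
  have : ENNReal.ofReal (a ^ (-(d : ℝ))) * (((2 * d : ℕ) : ℝ≥0∞) ^ N)⁻¹ ≠ ∞ :=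
    ENNReal.mul_ne_top ENNReal.ofReal_ne_top (ENNReal.inv_ne_top.2 hd)
  constructor
  simp only [Measure.coe_finsetSum, Finset.sum_apply, Measure.smul_apply, smul_eq_mul]
  refine ENNReal.sum_lt_top.2 fun s _ => ENNReal.mul_lt_top this.lt_top (measure_lt_top _ _)

lemma integral_VxyaN [NeZero d] {E : Type*} [NormedAddCommGroup E] [NormedSpace ℝ E]
    [CompleteSpace E]
    {x y : Ed d} {a : ℝ} (ha : 0 < a)
    {z : Fin d → ℤ} (hz : ∀ k, (y - x) k = a * z k) (N : ℕ) (G : PathSp d → E) :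
    ∫ ω, G ω.1 ∂(VxyaN x y a N) =
      (a ^ (-(d : ℝ)) * ((2 * d : ℝ) ^ N)⁻¹) • ∑ s : Fin N → Fin d × Bool,
        if ∑ i, latStep (s i) = z then G (pwLinE x N fun i => stepVec a (s i)) else 0 := by
  have hd : ((2 * d : ℕ) : ℝ≥0∞) ^ N ≠ 0 := by simp [NeZero.ne d]
  have htop : ENNReal.ofReal (a ^ (-(d : ℝ))) * (((2 * d : ℕ) : ℝ≥0∞) ^ N)⁻¹ ≠ ∞ :=
    ENNReal.mul_ne_top ENNReal.ofReal_ne_top (ENNReal.inv_ne_top.2 hd)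
  rw [VxyaN, Measure.sum_fintype, integral_finsetSum_measure]
  · simp only [integral_smul_measure, integral_dirac]
    rw [← Finset.smul_sum]
    congr 1
    · rw [ENNReal.toReal_mul, ENNReal.toReal_ofReal (by positivity), ENNReal.toReal_inv]
      simp
    · simp only [← sum_stepVec_eq_iff ha.ne' hz]
      rw [← Finset.sum_filter, ← Finset.sum_subtype_of_mem
        (f := fun s : Fin N → Fin d × Bool => G (pwLinE x N fun i => stepVec a (s i)))
        (p := fun s : Fin N → Fin d × Bool => x + ∑ i, stepVec a (s i) = y)
        (by intro s hs; simpa using hs)]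
      exact Finset.sum_congr (by ext s; simp [s.2]) fun s _ => rfl
  · intro s _
    exact (integrable_dirac (by simp)).smul_measure htop

lemma clamp01_mem (r : ℝ) : clamp01 r ∈ Set.Icc (0 : ℝ) 1 :=
  ⟨le_min zero_le_one (le_max_left _ _), min_le_left _ _⟩

lemma clamp01_mono : Monotone clamp01 := fun _ _ h => by
  unfold clamp01; gcongr

lemma sum_range_clamp01 (N : ℕ) (r : ℝ) :
    ∑ i ∈ Finset.range N, clamp01 (r - i) = min (N : ℝ) (max 0 r) := by
  induction N with
  | zero => simp
  | succ N ih =>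
    rw [Finset.sum_range_succ, ih, clamp01]
    push_cast
    have hN : (0 : ℝ) ≤ N := N.cast_nonneg
    rcases le_total r N with h | h
    · rw [max_eq_left (sub_nonpos.2 h), min_eq_right zero_le_one, min_eq_right (max_le hN h),
        min_eq_right (max_le (by linarith) (by linarith)), add_zero]
    · rw [max_eq_right (sub_nonneg.2 h), max_eq_right (hN.trans h), min_eq_left h,
        ← min_add_add_left]
      ring_nf

lemma sum_clamp01 {N : ℕ} {t : ℝ} (ht : t ∈ Set.Icc (0 : ℝ) 1) :
    ∑ i : Fin N, clamp01 (N * t - (i : ℕ)) = N * t := by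
  rw [Fin.sum_univ_eq_sum_range (fun i => clamp01 (N * t - i)) N, sum_range_clamp01]
  have hN : (0 : ℝ) ≤ N := N.cast_nonneg
  rw [max_eq_right (mul_nonneg hN ht.1), min_eq_right (mul_le_of_le_one_right hN ht.2)]

lemma sum_range_clamp01_mul_one_sub_le (N : ℕ) {r r' : ℝ} (h : r ≤ r') :
    ∑ i ∈ Finset.range N, clamp01 (r - i) * (1 - clamp01 (r' - i)) ≤ 1 := by
  have key : ∀ u v : ℝ, u ≤ v → clamp01 u * (1 - clamp01 v) ≤ clamp01 u - clamp01 (u - 1) := by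
    intro u v huv
    have h1 := clamp01_mem u
    have h2 := clamp01_mem v
    rcases le_total u 1 with hu | hu
    · rw [clamp01_of_nonpos (sub_nonpos.2 hu)]
      nlinarith [h1.1, h2.1]
    · rw [clamp01_of_one_le (hu.trans huv), sub_self, mul_zero]
      exact sub_nonneg.2 (clamp01_mono (by linarith))
  calc _ ≤ ∑ i ∈ Finset.range N, (clamp01 (r - i) - clamp01 (r - (i + 1 : ℕ))) := by
        refine Finset.sum_le_sum fun i _ => (key _ _ (by linarith)).trans_eq ?_
        push_cast; ring_nf
    _ = clamp01 (r - (0 : ℕ)) - clamp01 (r - N) :=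
        Finset.sum_range_sub' (fun i : ℕ => clamp01 (r - i)) N
    _ ≤ 1 := by linarith [(clamp01_mem (r - (0 : ℕ))).2, (clamp01_mem (r - N)).1]

lemma tendsto_sum_clamp01_mul {N : ℕ → ℕ} (hN : Tendsto N atTop atTop) {s t : ℝ}
    (hs : s ∈ Set.Icc (0 : ℝ) 1) (ht : t ∈ Set.Icc (0 : ℝ) 1) :
    Tendsto (fun n => (N n : ℝ)⁻¹ *
      ∑ i : Fin (N n), clamp01 (N n * s - (i : ℕ)) * clamp01 (N n * t - (i : ℕ)))
      atTop (𝓝 (min s t)) := by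
  wlog hst : s ≤ t generalizing s t
  · rw [min_comm]
    simpa only [mul_comm] using this ht hs (le_of_not_ge hst)
  rw [min_eq_left hst]
  have hinv : Tendsto (fun n => (N n : ℝ)⁻¹) atTop (𝓝 0) :=
    tendsto_inv_atTop_zero.comp (tendsto_natCast_atTop_atTop.comp hN)
  have hpos : ∀ᶠ n in atTop, 0 < N n := hN.eventually_gt_atTop 0
  have hsum : ∀ n, ∑ i : Fin (N n), clamp01 (N n * s - (i : ℕ)) * clamp01 (N n * t - (i : ℕ)) =
      N n * s - ∑ i : Fin (N n),
        clamp01 (N n * s - (i : ℕ)) * (1 - clamp01 (N n * t - (i : ℕ))) := by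
    intro n
    rw [eq_sub_iff_add_eq, ← Finset.sum_add_distrib]
    exact (Finset.sum_congr rfl fun i _ => by ring).trans (sum_clamp01 hs)
  refine tendsto_of_tendsto_of_tendsto_of_le_of_le'
    (g := fun n => s - (N n : ℝ)⁻¹) (h := fun _ => s) ?_ tendsto_const_nhds ?_ ?_
  · simpa using tendsto_const_nhds.sub hinv
  · filter_upwards [hpos] with n hn
    have hn' : (0 : ℝ) < N n := by exact_mod_cast hn
    rw [hsum, mul_sub, inv_mul_cancel_left₀ hn'.ne']
    have := sum_range_clamp01_mul_one_sub_le (N n) (r := N n * s) (r' := N n * t) (by gcongr)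
    rw [Fin.sum_univ_eq_sum_range
      (fun i => clamp01 (N n * s - i) * (1 - clamp01 (N n * t - i))) (N n)]
    gcongr
    exact mul_le_of_le_one_right (by positivity) this
  · filter_upwards [hpos] with n hn
    have hn' : (0 : ℝ) < N n := by exact_mod_cast hn
    rw [hsum, mul_sub, inv_mul_cancel_left₀ hn'.ne']
    refine sub_le_self _ (mul_nonneg (by positivity) (Finset.sum_nonneg fun i _ => ?_))
    exact mul_nonneg (clamp01_mem _).1 (sub_nonneg.2 (clamp01_mem _).2)

lemma abs_prod_sub_prod_le {ι : Type*} (s : Finset ι) (b c : ι → ℝ)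
    (hb : ∀ i ∈ s, |b i| ≤ 1) (hc : ∀ i ∈ s, |c i| ≤ 1) :
    |∏ i ∈ s, b i - ∏ i ∈ s, c i| ≤ ∑ i ∈ s, |b i - c i| := by
  classical
  induction s using Finset.induction_on with
  | empty => simp
  | insert j s hj ih =>
    rw [Finset.prod_insert hj, Finset.prod_insert hj, Finset.sum_insert hj]
    have ih := ih (fun i hi => hb i (Finset.mem_insert_of_mem hi))
      (fun i hi => hc i (Finset.mem_insert_of_mem hi))
    have h1 : |∏ i ∈ s, b i| ≤ 1 := by
      rw [Finset.abs_prod]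
      exact Finset.prod_le_one (fun i _ => abs_nonneg _)
        fun i hi => hb i (Finset.mem_insert_of_mem hi)
    have hcj := hc j (Finset.mem_insert_self _ _)
    calc |b j * ∏ i ∈ s, b i - c j * ∏ i ∈ s, c i|
        = |(b j - c j) * ∏ i ∈ s, b i + c j * (∏ i ∈ s, b i - ∏ i ∈ s, c i)| := by ring_nf
      _ ≤ |b j - c j| * |∏ i ∈ s, b i| + |c j| * |∏ i ∈ s, b i - ∏ i ∈ s, c i| := by
          rw [← abs_mul, ← abs_mul]; exact abs_add_le _ _
      _ ≤ |b j - c j| * 1 + 1 * ∑ i ∈ s, |b i - c i| := by gcongr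
      _ = _ := by ring

lemma abs_meanCos_sub_exp_le [NeZero d] {u : Ed d} (hu : ‖u‖ ≤ 1) :
    |meanCos u - Real.exp (-(‖u‖ ^ 2 / (2 * d)))| ≤ 2 * ‖u‖ ^ 4 := by
  have hd : (1 : ℝ) ≤ d := by exact_mod_cast NeZero.one_le
  have hd0 : (d : ℝ) ≠ 0 := by positivity
  have h1 : |meanCos u - (1 - ‖u‖ ^ 2 / (2 * d))| ≤ ‖u‖ ^ 4 := by
    have : meanCos u - (1 - ‖u‖ ^ 2 / (2 * d)) =
        (∑ k, (Real.cos (u k) - (1 - u k ^ 2 / 2))) / d := by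
      rw [meanCos, EuclideanSpace.norm_sq_eq]
      simp only [Real.norm_eq_abs, sq_abs, Finset.sum_sub_distrib, ← Finset.sum_div]
      simp
      field_simp
    rw [this, abs_div, Nat.abs_cast, div_le_iff₀ (by positivity)]
    refine (Finset.abs_sum_le_sum_abs _ _).trans ?_
    calc _ ≤ ∑ k : Fin d, ‖u‖ ^ 4 := by
          refine Finset.sum_le_sum fun k _ => ?_
          have hk : |u k| ≤ ‖u‖ := by simpa using PiLp.norm_apply_le u k
          refine (Real.cos_bound (hk.trans hu)).trans ?_
          calc |u k| ^ 4 * (5 / 96) ≤ ‖u‖ ^ 4 * 1 := by gcongr; norm_num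
            _ = _ := mul_one _
      _ = _ := by simp [mul_comm]
  have h0 : 0 ≤ ‖u‖ ^ 2 / (2 * d) := by positivity
  have h3 : ‖u‖ ^ 2 / (2 * d) ≤ ‖u‖ ^ 2 := div_le_self (by positivity) (by linarith)
  have h4 : ‖u‖ ^ 2 ≤ 1 := pow_le_one₀ (norm_nonneg _) hu
  have h2 : |Real.exp (-(‖u‖ ^ 2 / (2 * d))) - (1 - ‖u‖ ^ 2 / (2 * d))| ≤ ‖u‖ ^ 4 := by
    have := Real.abs_exp_sub_one_sub_id_le (x := -(‖u‖ ^ 2 / (2 * d)))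
      (by rw [abs_neg, abs_of_nonneg h0]; linarith)
    calc _ = |Real.exp (-(‖u‖ ^ 2 / (2 * d))) - 1 - -(‖u‖ ^ 2 / (2 * d))| := by ring_nf
      _ ≤ _ := this
      _ ≤ _ := by
        rw [neg_sq, show ‖u‖ ^ 4 = (‖u‖ ^ 2) ^ 2 by ring]
        gcongr
  calc _ = |(meanCos u - (1 - ‖u‖ ^ 2 / (2 * d))) -
      (Real.exp (-(‖u‖ ^ 2 / (2 * d))) - (1 - ‖u‖ ^ 2 / (2 * d)))| := by ring_nf
    _ ≤ _ := abs_sub _ _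
    _ ≤ _ := by linarith

lemma tendsto_prod_meanCos [NeZero d] {a : ℕ → ℝ} {N : ℕ → ℕ} {t B L : ℝ} (ha : ∀ n, 0 < a n)
    (ha0 : Tendsto a atTop (𝓝 0)) (hN : Tendsto (fun n => N n * a n ^ 2 / d) atTop (𝓝 t))
    {u : ∀ n, Fin (N n) → Ed d} (hB : ∀ n i, ‖u n i‖ ≤ B)
    (hL : Tendsto (fun n => (a n ^ 2 / (2 * d)) * ∑ i, ‖u n i‖ ^ 2) atTop (𝓝 L)) :
    Tendsto (fun n => ∏ i, meanCos (a n • u n i)) atTop (𝓝 (Real.exp (-L))) := by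
  have hd : (0 : ℝ) < d := by exact_mod_cast NeZero.pos d
  have hnorm : ∀ n i, ‖a n • u n i‖ ≤ a n * B := fun n i => by
    rw [norm_smul, Real.norm_of_nonneg (ha n).le]
    exact mul_le_mul_of_nonneg_left (hB n i) (ha n).le
  have haB : Tendsto (fun n => a n * B) atTop (𝓝 0) := by simpa using ha0.mul_const B
  have hexp : Tendsto (fun n => ∏ i, Real.exp (-(‖a n • u n i‖ ^ 2 / (2 * d)))) atTop
      (𝓝 (Real.exp (-L))) := by
    refine ((Real.continuous_exp.tendsto _).comp hL.neg).congr fun n => ?_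
    rw [← Real.exp_sum]
    simp only [Function.comp, Finset.mul_sum, ← Finset.sum_neg_distrib, norm_smul,
      Real.norm_of_nonneg (ha n).le]
    congr 1
    refine Finset.sum_congr rfl fun i _ => by ring
  have hbound : Tendsto (fun n => (N n * a n ^ 2 / d) * (2 * d * B ^ 4 * a n ^ 2)) atTop
      (𝓝 0) := by
    simpa using hN.mul ((ha0.pow 2).const_mul (2 * d * B ^ 4))
  have hdiff : Tendsto (fun n => ∏ i, meanCos (a n • u n i) -
      ∏ i, Real.exp (-(‖a n • u n i‖ ^ 2 / (2 * d)))) atTop (𝓝 0) := by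
    refine squeeze_zero_norm' ?_ hbound
    filter_upwards [haB.eventually (gt_mem_nhds zero_lt_one)] with n hn
    rw [Real.norm_eq_abs]
    refine (abs_prod_sub_prod_le _ _ _ (fun i _ => abs_meanCos_le_one _) fun i _ => ?_).trans ?_
    · rw [Real.abs_exp, Real.exp_le_one_iff, neg_nonpos]; positivity
    · calc _ ≤ ∑ i : Fin (N n), 2 * (a n * B) ^ 4 := by
            refine Finset.sum_le_sum fun i _ =>
              (abs_meanCos_sub_exp_le ((hnorm n i).trans hn.le)).trans ?_
            have := hnorm n i
            gcongr
        _ = _ := by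
          simp only [Finset.sum_const, Finset.card_univ, Fintype.card_fin, nsmul_eq_mul]
          field_simp
  simpa using hdiff.add hexp

/-- The frequency seen by the `i`-th increment of an `N`-step piecewise linear path when it is
tested against frequencies `ξ` at times `T`. -/
def stepFreq {K : ℕ} (T : Fin K → ℝ) (ξ : Fin K → Ed d) (N i : ℕ) : Ed d :=
  ∑ j, clamp01 (N * T j - i) • ξ j

lemma norm_stepFreq_le {K : ℕ} (T : Fin K → ℝ) (ξ : Fin K → Ed d) (N i : ℕ) :
    ‖stepFreq T ξ N i‖ ≤ ∑ j, ‖ξ j‖ := by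
  refine (norm_sum_le _ _).trans (Finset.sum_le_sum fun j _ => ?_)
  rw [norm_smul, Real.norm_of_nonneg (clamp01_mem _).1]
  exact mul_le_of_le_one_left (norm_nonneg _) (clamp01_mem _).2

lemma sum_inner_pwLinE {K : ℕ} {T : Fin K → ℝ} (hT : ∀ j, T j ∈ Set.Icc (0 : ℝ) 1)
    (ξ : Fin K → Ed d) (x : Ed d) (N : ℕ) (v : Fin N → Ed d) :
    ∑ j, ⟪ξ j, evalAt (pwLinE x N v) (T j)⟫ =
      ∑ j, ⟪ξ j, x⟫ + ∑ i : Fin N, ⟪stepFreq T ξ N i, v i⟫ := by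
  have h : ∀ j, evalAt (pwLinE x N v) (T j) =
      x + ∑ i : Fin N, clamp01 (N * T j - (i : ℕ)) • v i := by
    intro j
    rw [evalAt, Set.projIcc_of_mem _ (hT j)]
    rfl
  simp only [h, inner_add_right, Finset.sum_add_distrib, inner_sum, stepFreq, sum_inner,
    real_inner_smul_left, real_inner_smul_right]
  rw [Finset.sum_comm]

lemma integral_cexp_VxyaN [NeZero d] (i₀ : Fin d) {x y : Ed d} {a : ℝ} (ha : 0 < a)
    {z : Fin d → ℤ} (hz : ∀ k, (y - x) k = a * z k) {N : ℕ} (hN : Even ((N : ℤ) + ∑ k, z k))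
    {K : ℕ} {T : Fin K → ℝ} (hT : ∀ j, T j ∈ Set.Icc (0 : ℝ) 1) (ξ : Fin K → Ed d) :
    ∫ ω, Complex.exp (Complex.I * ((∑ j, ⟪ξ j, evalAt ω.1 (T j)⟫ : ℝ) : ℂ)) ∂(VxyaN x y a N) =
      Complex.exp (Complex.I * ((∑ j, ⟪ξ j, x⟫ : ℝ) : ℂ)) * (((2 / (2 * π) ^ d : ℝ) : ℂ) *
        ∫ p : Ed d, {p : Ed d | a • p ∈ halfCell i₀}.indicator (fun p =>
          Complex.exp (-(Complex.I * ((⟪p, y - x⟫ : ℝ) : ℂ))) *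
            ((∏ i : Fin N, meanCos (a • (p + stepFreq T ξ N i)) : ℝ) : ℂ)) p) := by
  have hd : (0 : ℝ) < d := by exact_mod_cast NeZero.pos d
  rw [integral_VxyaN ha hz N
    (fun ω => Complex.exp (Complex.I * ((∑ j, ⟪ξ j, evalAt ω (T j)⟫ : ℝ) : ℂ)))]
  have h1 : ∀ s : Fin N → Fin d × Bool,
      Complex.exp (Complex.I * ((∑ j, ⟪ξ j, evalAt (pwLinE x N fun i => stepVec a (s i)) (T j)⟫ : ℝ)
        : ℂ)) = Complex.exp (Complex.I * ((∑ j, ⟪ξ j, x⟫ : ℝ) : ℂ)) *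
        ∏ i : Fin N, Complex.exp (Complex.I * ((⟪stepFreq T ξ N i, stepVec a (s i)⟫ : ℝ) : ℂ)) := by
    intro s
    rw [sum_inner_pwLinE hT, ← Complex.exp_sum, ← Complex.exp_add, ← Finset.mul_sum,
      Complex.ofReal_add, mul_add, ← Complex.ofReal_sum]
  simp only [h1, ← mul_ite_zero]
  rw [← Finset.mul_sum, sum_paths_eq_integral i₀
    (fun i p => Complex.exp (Complex.I * ((⟪stepFreq T ξ N (i : Fin N), stepVec a p⟫ : ℝ) : ℂ))) z
    (by simpa using hN)]
  simp only [sum_cexp_latStep (NeZero.pos d)]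
  rw [← integral_indicator (measurableSet_halfCell i₀)]
  have h2 := Measure.integral_comp_smul (volume : Measure (Ed d)) ((halfCell i₀).indicator
    fun θ : Ed d => Complex.exp (-(Complex.I * ∑ k, (θ k : ℂ) * (z k : ℂ))) *
      ∏ i : Fin N, ((2 * d * meanCos (θ + a • stepFreq T ξ N i) : ℝ) : ℂ)) a
  have h3 : ∀ p : Ed d, (halfCell i₀).indicator (fun θ : Ed d =>
      Complex.exp (-(Complex.I * ∑ k, (θ k : ℂ) * (z k : ℂ))) *
      ∏ i : Fin N, ((2 * d * meanCos (θ + a • stepFreq T ξ N i) : ℝ) : ℂ)) (a • p) =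
      ((2 * d : ℝ) : ℂ) ^ N * {p : Ed d | a • p ∈ halfCell i₀}.indicator (fun p =>
          Complex.exp (-(Complex.I * ((⟪p, y - x⟫ : ℝ) : ℂ))) *
            ((∏ i : Fin N, meanCos (a • (p + stepFreq T ξ N i)) : ℝ) : ℂ)) p := by
    intro p
    by_cases hp : a • p ∈ halfCell i₀
    · rw [Set.indicator_of_mem hp, Set.indicator_of_mem (by exact hp)]
      have h4 : ∑ k, ((a • p) k : ℂ) * (z k : ℂ) = ((⟪p, y - x⟫ : ℝ) : ℂ) := by
        rw [PiLp.inner_apply]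
        push_cast
        refine Finset.sum_congr rfl fun k _ => ?_
        rw [hz k]
        simp
        ring
      rw [h4]
      simp only [Complex.ofReal_mul, Finset.prod_mul_distrib, Finset.prod_const,
        Finset.card_univ, Fintype.card_fin, smul_add, Complex.ofReal_prod]
      ring
    · rw [Set.indicator_of_notMem hp, Set.indicator_of_notMem (by exact hp), mul_zero]
  simp only [h3] at h2
  rw [integral_const_mul] at h2
  have h5 : |(a ^ Module.finrank ℝ (Ed d))⁻¹| = a ^ (-(d : ℝ)) := by
    rw [abs_of_pos (by positivity), finrank_euclideanSpace_fin, Real.rpow_neg ha.le,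
      Real.rpow_natCast]
  rw [h5] at h2
  set J := ∫ θ : Ed d, (halfCell i₀).indicator (fun θ : Ed d =>
      Complex.exp (-(Complex.I * ∑ k, (θ k : ℂ) * (z k : ℂ))) *
      ∏ i : Fin N, ((2 * d * meanCos (θ + a • stepFreq T ξ N i) : ℝ) : ℂ)) θ
  have h6 : ((2 * d : ℝ) : ℂ) ^ N ≠ 0 := by
    apply pow_ne_zero
    exact_mod_cast (by positivity : (2 * d : ℝ) ≠ 0)
  rw [← eq_inv_mul_iff_mul_eq₀ h6] at h2
  rw [h2]
  simp only [Complex.real_smul, Complex.ofReal_mul, Complex.ofReal_inv, Complex.ofReal_pow]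
  ring

lemma sum_norm_add_stepFreq_sq {K : ℕ} {T : Fin K → ℝ} (hT : ∀ j, T j ∈ Set.Icc (0 : ℝ) 1)
    (ξ : Fin K → Ed d) (p : Ed d) (N : ℕ) :
    ∑ i : Fin N, ‖p + stepFreq T ξ N i‖ ^ 2 =
      N * (‖p‖ ^ 2 + 2 * ⟪p, ∑ j, T j • ξ j⟫) + ∑ j, ∑ l,
        (∑ i : Fin N, clamp01 (N * T j - (i : ℕ)) * clamp01 (N * T l - (i : ℕ))) * ⟪ξ j, ξ l⟫ := by
  have h1 : ∑ i : Fin N, ⟪p, stepFreq T ξ N i⟫ = N * ⟪p, ∑ j, T j • ξ j⟫ := by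
    simp only [stepFreq, inner_sum, real_inner_smul_right]
    rw [Finset.sum_comm, Finset.mul_sum]
    refine Finset.sum_congr rfl fun j _ => ?_
    rw [← Finset.sum_mul, sum_clamp01 (hT j), mul_assoc]
  have h2 : ∑ i : Fin N, ‖stepFreq T ξ N i‖ ^ 2 = ∑ j, ∑ l,
      (∑ i : Fin N, clamp01 (N * T j - (i : ℕ)) * clamp01 (N * T l - (i : ℕ))) * ⟪ξ j, ξ l⟫ := by
    simp only [← real_inner_self_eq_norm_sq, stepFreq, inner_sum, sum_inner,
      real_inner_smul_left, real_inner_smul_right, Finset.sum_mul]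
    rw [Finset.sum_comm]
    conv_lhs => enter [2, j]; rw [Finset.sum_comm]
    rw [Finset.sum_comm]
    refine Finset.sum_congr rfl fun j _ => Finset.sum_congr rfl fun l _ =>
      Finset.sum_congr rfl fun i _ => by ring
  simp only [norm_add_sq_real, Finset.sum_add_distrib, ← Finset.mul_sum, h1, h2]
  simp
  ring

lemma tendsto_atTop_of_mul_sq {a : ℕ → ℝ} {N : ℕ → ℕ} {t : ℝ} (ht : 0 < t) (hd : 0 < d)
    (ha : ∀ n, 0 < a n) (ha0 : Tendsto a atTop (𝓝 0))
    (hN : Tendsto (fun n => N n * a n ^ 2 / d) atTop (𝓝 t)) : Tendsto N atTop atTop := by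
  rw [← tendsto_natCast_atTop_iff (R := ℝ)]
  have hd' : (0 : ℝ) < d := by exact_mod_cast hd
  have h1 : Tendsto (fun n => (a n ^ 2 / d)⁻¹) atTop atTop := by
    refine Tendsto.inv_tendsto_nhdsGT_zero (tendsto_nhdsWithin_iff.2 ⟨?_, ?_⟩)
    · simpa using (ha0.pow 2).div_const (d : ℝ)
    · exact Eventually.of_forall fun n => by have := ha n; simp only [Set.mem_Ioi]; positivity
  refine (hN.pos_mul_atTop ht h1).congr fun n => ?_
  have := (ha n).ne'
  field_simp

lemma tendsto_sum_norm_add_stepFreq_sq {K : ℕ} {T : Fin K → ℝ}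
    (hT : ∀ j, T j ∈ Set.Icc (0 : ℝ) 1) (ξ : Fin K → Ed d) (p : Ed d)
    {a : ℕ → ℝ} {N : ℕ → ℕ} {t : ℝ} (hN' : Tendsto N atTop atTop)
    (hN : Tendsto (fun n => N n * a n ^ 2 / d) atTop (𝓝 t)) :
    Tendsto (fun n => a n ^ 2 / (2 * d) * ∑ i : Fin (N n), ‖p + stepFreq T ξ (N n) i‖ ^ 2) atTop
      (𝓝 (t / 2 * (‖p‖ ^ 2 + 2 * ⟪p, ∑ j, T j • ξ j⟫ +
        ∑ j, ∑ l, min (T j) (T l) * ⟪ξ j, ξ l⟫))) := by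
  have h1 : Tendsto (fun n => ∑ j, ∑ l, ((N n : ℝ)⁻¹ * ∑ i : Fin (N n),
      clamp01 (N n * T j - (i : ℕ)) * clamp01 (N n * T l - (i : ℕ))) * ⟪ξ j, ξ l⟫) atTop
      (𝓝 (∑ j, ∑ l, min (T j) (T l) * ⟪ξ j, ξ l⟫)) :=
    tendsto_finsetSum _ fun j _ => tendsto_finsetSum _ fun l _ =>
      (tendsto_sum_clamp01_mul hN' (hT j) (hT l)).mul_const _
  refine ((hN.div_const 2).mul (h1.const_add (‖p‖ ^ 2 + 2 * ⟪p, ∑ j, T j • ξ j⟫))).congr' ?_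
  filter_upwards [hN'.eventually_gt_atTop 0] with n hn
  have hn' : (N n : ℝ) ≠ 0 := by exact_mod_cast hn.ne'
  rw [sum_norm_add_stepFreq_sq hT]
  simp only [mul_assoc, ← Finset.mul_sum]
  field_simp

lemma sum_mul_norm_sum_Ici_sq {n : ℕ} {ts : ℕ → ℝ} (h0 : ts 0 = 0)
    (hts : ∀ i < n, ts i < ts (i + 1)) (ξ : Fin n → Ed d) :
    ∑ i : Fin n, (ts ((i : ℕ) + 1) - ts (i : ℕ)) * ‖∑ j ∈ Finset.Ici i, ξ j‖ ^ 2 =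
      ∑ j : Fin n, ∑ l : Fin n, min (ts ((j : ℕ) + 1)) (ts ((l : ℕ) + 1)) * ⟪ξ j, ξ l⟫ := by
  have hmono : ∀ i j, i ≤ j → j ≤ n → ts i ≤ ts j := by
    intro i j hij hj
    induction j, hij using Nat.le_induction with
    | base => exact le_rfl
    | succ k _ ih => exact (ih (by omega)).trans (hts k (by omega)).le
  have hexp : ∀ i : Fin n, ‖∑ j ∈ Finset.Ici i, ξ j‖ ^ 2 =
      ∑ j, ∑ l, (if i ≤ j then (if i ≤ l then 1 else 0) else 0) * ⟪ξ j, ξ l⟫ := by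
    intro i
    have : ∑ j ∈ Finset.Ici i, ξ j = ∑ j, if i ≤ j then ξ j else 0 := by
      rw [← Finset.sum_filter]; congr 1; ext; simp
    rw [← real_inner_self_eq_norm_sq, this, sum_inner]
    refine Finset.sum_congr rfl fun j _ => ?_
    rw [inner_sum]
    refine Finset.sum_congr rfl fun l _ => ?_
    split_ifs <;> simp
  have htel : ∀ j l : Fin n, ∑ i : Fin n, (ts ((i : ℕ) + 1) - ts (i : ℕ)) *
      (if i ≤ j then (if i ≤ l then 1 else 0) else 0) =
      min (ts ((j : ℕ) + 1)) (ts ((l : ℕ) + 1)) := by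
    intro j l
    wlog hjl : j ≤ l generalizing j l
    · rw [min_comm, ← this l j (le_of_not_ge hjl)]
      refine Finset.sum_congr rfl fun i _ => ?_
      split_ifs <;> rfl
    have hjl' : (j : ℕ) ≤ l := hjl
    rw [min_eq_left (hmono _ _ (by omega) (by omega))]
    calc _ = ∑ i : Fin n, if (i : ℕ) < j + 1 then ts ((i : ℕ) + 1) - ts (i : ℕ) else 0 := by
          refine Finset.sum_congr rfl fun i _ => ?_
          by_cases hi : i ≤ j
          · rw [if_pos hi, if_pos (hi.trans hjl), if_pos (by omega), mul_one]
          · rw [if_neg hi, if_neg (by omega), mul_zero]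
      _ = ∑ i ∈ Finset.range (j + 1), (ts (i + 1) - ts i) := by
          rw [Fin.sum_univ_eq_sum_range (fun i => if i < (j : ℕ) + 1 then ts (i + 1) - ts i else 0),
            ← Finset.sum_filter]
          congr 1
          ext i
          simp only [Finset.mem_filter, Finset.mem_range]
          omega
      _ = ts (j + 1) := by rw [Finset.sum_range_sub, h0, sub_zero]
  simp only [hexp, Finset.mul_sum]
  rw [Finset.sum_comm]
  refine Finset.sum_congr rfl fun j _ => ?_
  rw [Finset.sum_comm]
  refine Finset.sum_congr rfl fun l _ => ?_
  rw [← htel j l, Finset.sum_mul]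
  refine Finset.sum_congr rfl fun i _ => by ring

lemma integral_cexp_shifted_gaussian {t : ℝ} (ht : 0 < t) (c w : Ed d) (Q : ℝ) :
    ((2 / (2 * π) ^ d : ℝ) : ℂ) * ∫ p : Ed d, Complex.exp (-(Complex.I * ((⟪p, w⟫ : ℝ) : ℂ))) *
        ((Real.exp (-(t / 2 * (‖p‖ ^ 2 + 2 * ⟪p, c⟫ + Q))) : ℝ) : ℂ) =
      2 * ((((2 * π * t) ^ (-(d : ℝ) / 2) * Real.exp (-‖w‖ ^ 2 / (2 * t)) : ℝ) : ℂ) *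
        Complex.exp (((-(t / 2) * (Q - ‖c‖ ^ 2) : ℝ) : ℂ) +
          Complex.I * ((⟪c, w⟫ : ℝ) : ℂ))) := by
  rw [← integral_sub_right_eq_self _ c]
  have h1 : ∀ p : Ed d, Complex.exp (-(Complex.I * ((⟪p - c, w⟫ : ℝ) : ℂ))) *
        ((Real.exp (-(t / 2 * (‖p - c‖ ^ 2 + 2 * ⟪p - c, c⟫ + Q))) : ℝ) : ℂ) =
      Complex.exp (((-(t / 2) * (Q - ‖c‖ ^ 2) : ℝ) : ℂ) + Complex.I * ((⟪c, w⟫ : ℝ) : ℂ)) *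
        Complex.exp (-((t / 2 : ℝ) : ℂ) * ‖p‖ ^ 2 + (-Complex.I) * ((⟪w, p⟫ : ℝ) : ℂ)) := by
    intro p
    have h2 : ‖p - c‖ ^ 2 + 2 * ⟪p - c, c⟫ + Q = ‖p‖ ^ 2 + (Q - ‖c‖ ^ 2) := by
      rw [norm_sub_sq_real, inner_sub_left, real_inner_self_eq_norm_sq]; ring
    rw [h2, Complex.ofReal_exp, ← Complex.exp_add, ← Complex.exp_add, inner_sub_left,
      real_inner_comm w p]
    congr 1
    push_cast
    ring
  simp only [h1]
  rw [integral_const_mul, GaussianFourier.integral_cexp_neg_mul_sq_norm_add (by simpa using ht),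
    finrank_euclideanSpace_fin]
  have h3 : ((π : ℂ) / ((t / 2 : ℝ) : ℂ)) ^ ((d : ℂ) / 2) =
      (((π / (t / 2)) ^ ((d : ℝ) / 2) : ℝ) : ℂ) := by
    rw [Complex.ofReal_cpow (by positivity)]; push_cast; rfl
  have h4 : (-Complex.I) ^ 2 * (‖w‖ : ℂ) ^ 2 / (4 * ((t / 2 : ℝ) : ℂ)) =
      ((-‖w‖ ^ 2 / (2 * t) : ℝ) : ℂ) := by
    push_cast
    rw [neg_sq, Complex.I_sq]
    field_simp
    norm_num
  have h5 : 2 / (2 * π) ^ d * (π / (t / 2)) ^ ((d : ℝ) / 2) = 2 * (2 * π * t) ^ (-(d : ℝ) / 2) := by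
    have e1 : (2 * π) ^ d = ((2 * π) ^ ((d : ℝ) / 2)) ^ 2 := by
      rw [← Real.rpow_natCast, ← Real.rpow_natCast, ← Real.rpow_mul (by positivity)]
      congr 1; push_cast; ring
    rw [show π / (t / 2) = 2 * π / t by field_simp, Real.div_rpow (by positivity) ht.le, e1,
      neg_div, Real.rpow_neg (by positivity), Real.mul_rpow (by positivity) ht.le]
    have : 0 < (2 * π) ^ ((d : ℝ) / 2) := by positivity
    field_simp
  rw [h3, h4, Complex.ofReal_mul ((2 * π * t) ^ (-(d : ℝ) / 2)), ← Complex.ofReal_exp]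
  have h6 : (((2 / (2 * π) ^ d : ℝ) : ℂ)) * (((π / (t / 2)) ^ ((d : ℝ) / 2) : ℝ) : ℂ) =
      2 * (((2 * π * t) ^ (-(d : ℝ) / 2) : ℝ) : ℂ) := by
    rw [← Complex.ofReal_mul, h5]; push_cast; rfl
  linear_combination (Complex.exp (((-(t / 2) * (Q - ‖c‖ ^ 2) : ℝ) : ℂ) +
    Complex.I * ((⟪c, w⟫ : ℝ) : ℂ)) * ((Real.exp (-‖w‖ ^ 2 / (2 * t)) : ℝ) : ℂ)) * h6

/-- A diffusive scaling: lattice spacings `a n → 0`, numbers of steps `N n` of order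
`d t / a n ^ 2`, and lattice displacements `z n` from `x` to `y` of the right parity. -/
structure DiffusiveScaling (x y : Ed d) (t : ℝ) (a : ℕ → ℝ) (N : ℕ → ℕ)
    (z : ℕ → Fin d → ℤ) : Prop where
  time_pos : 0 < t
  spacing_pos : ∀ n, 0 < a n
  spacing_tendsto : Tendsto a atTop (𝓝 0)
  time_tendsto : Tendsto (fun n => N n * a n ^ 2 / d) atTop (𝓝 t)
  displacement : ∀ n k, (y - x) k = a n * z n k
  parity : ∀ n, Even ((N n : ℤ) + ∑ k, z n k)

lemma DiffusiveScaling.steps_tendsto [NeZero d] {x y : Ed d} {t : ℝ} {a : ℕ → ℝ} {N : ℕ → ℕ}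
    {z : ℕ → Fin d → ℤ} (h : DiffusiveScaling x y t a N z) : Tendsto N atTop atTop :=
  tendsto_atTop_of_mul_sq h.time_pos (NeZero.pos d) h.spacing_pos h.spacing_tendsto h.time_tendsto

lemma abs_prod_meanCos_le (i₀ : Fin d) {a B : ℝ} (ha : 0 < a) (haB : a * B ≤ π / 6) {p : Ed d}
    (hp : a • p ∈ halfCell i₀) {N : ℕ} {c : Fin N → Ed d} (hc : ∀ i, ‖c i‖ ≤ B) :
    |∏ i, meanCos (a • (p + c i))| ≤
      Real.exp (cosRate d * (N * a ^ 2) * B ^ 2 - cosRate d * (N * a ^ 2) / 2 * ‖p‖ ^ 2) := by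
  have hpi := Real.pi_pos
  have hκ := cosRate_pos (Fin.pos i₀)
  obtain ⟨h1, h2⟩ := halfCell_bounds hp
  rw [Finset.abs_prod]
  have hterm : ∀ i, |meanCos (a • (p + c i))| ≤
      Real.exp (cosRate d * a ^ 2 * B ^ 2 - cosRate d * a ^ 2 / 2 * ‖p‖ ^ 2) := by
    intro i
    have hck : ∀ k, |(a • c i) k| ≤ π / 6 := fun k => by
      calc |(a • c i) k| ≤ ‖a • c i‖ := by simpa using PiLp.norm_apply_le (a • c i) k
        _ = a * ‖c i‖ := by rw [norm_smul, Real.norm_of_nonneg ha.le]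
        _ ≤ a * B := by gcongr; exact hc i
        _ ≤ _ := haB
    have hadd : ∀ k, |(a • (p + c i)) k| ≤ |(a • p) k| + π / 6 := fun k => by
      rw [smul_add, PiLp.add_apply]
      exact (abs_add_le _ _).trans (by gcongr; exact hck k)
    refine (abs_meanCos_le i₀ _ ((hadd i₀).trans (by linarith))
      fun k => (hadd k).trans (by linarith [h2 k])).trans ?_
    rw [Real.exp_le_exp, norm_smul, mul_pow, Real.norm_of_nonneg ha.le]
    have h3 : ‖p‖ ^ 2 / 2 - B ^ 2 ≤ ‖p + c i‖ ^ 2 := by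
      have h4 : ‖p‖ ≤ ‖p + c i‖ + B := by
        calc ‖p‖ = ‖(p + c i) - c i‖ := by rw [add_sub_cancel_right]
          _ ≤ ‖p + c i‖ + ‖c i‖ := norm_sub_le _ _
          _ ≤ _ := by gcongr; exact hc i
      nlinarith [norm_nonneg p, norm_nonneg (p + c i), sq_nonneg (‖p + c i‖ - B)]
    nlinarith [mul_le_mul_of_nonneg_left h3 (mul_nonneg hκ.le (sq_nonneg a))]
  calc ∏ i, |meanCos (a • (p + c i))|
      ≤ ∏ _i : Fin N, Real.exp (cosRate d * a ^ 2 * B ^ 2 - cosRate d * a ^ 2 / 2 * ‖p‖ ^ 2) :=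
        Finset.prod_le_prod (fun i _ => abs_nonneg _) fun i _ => hterm i
    _ = _ := by
        rw [Finset.prod_const, Finset.card_univ, Fintype.card_fin, ← Real.exp_nat_mul]
        congr 1; ring

lemma eventually_smul_mem_halfCell (i₀ : Fin d) {a : ℕ → ℝ} (ha0 : Tendsto a atTop (𝓝 0))
    (p : Ed d) : ∀ᶠ n in atTop, a n • p ∈ halfCell i₀ := by
  simp only [halfCell, Set.mem_ofPred_eq, Filter.eventually_all]
  intro k
  have h : Tendsto (fun n => |(a n • p) k|) atTop (𝓝 0) := by
    simpa using (ha0.mul_const (p k)).abs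
  refine (h.eventually_le_const (u := π / 2) (by positivity)).mono fun n hn => hn.trans ?_
  split_ifs <;> linarith [Real.pi_pos]

lemma DiffusiveScaling.tendsto_integral_cexp [NeZero d] {x y : Ed d} {t : ℝ} {a : ℕ → ℝ}
    {N : ℕ → ℕ} {z : ℕ → Fin d → ℤ} (h : DiffusiveScaling x y t a N z)
    {K : ℕ} {T : Fin K → ℝ} (hT : ∀ j, T j ∈ Set.Icc (0 : ℝ) 1) (ξ : Fin K → Ed d) :
    Tendsto (fun n => ∫ ω, Complex.exp (Complex.I * ((∑ j, ⟪ξ j, evalAt ω.1 (T j)⟫ : ℝ) : ℂ))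
        ∂(VxyaN x y (a n) (N n))) atTop
      (𝓝 (2 * ((((2 * π * t) ^ (-(d : ℝ) / 2) * Real.exp (-‖x - y‖ ^ 2 / (2 * t)) : ℝ) : ℂ) *
        Complex.exp (((-(t / 2) * ((∑ j, ∑ l, min (T j) (T l) * ⟪ξ j, ξ l⟫) -
          ‖∑ j, T j • ξ j‖ ^ 2) : ℝ) : ℂ) +
          Complex.I * ((∑ j, ⟪ξ j, (1 - T j) • x + T j • y⟫ : ℝ) : ℂ))))) := by
  have hpi := Real.pi_pos
  have hd : (0 : ℝ) < d := by exact_mod_cast NeZero.pos d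
  let i₀ : Fin d := ⟨0, NeZero.pos d⟩
  have hκ := cosRate_pos (NeZero.pos d)
  have ht := h.time_pos
  set c : Ed d := ∑ j, T j • ξ j with hc
  set Q : ℝ := ∑ j, ∑ l, min (T j) (T l) * ⟪ξ j, ξ l⟫ with hQ
  set B : ℝ := ∑ j, ‖ξ j‖ with hBdef
  have hlim : Tendsto (fun n => ∫ p : Ed d, {p : Ed d | a n • p ∈ halfCell i₀}.indicator (fun p =>
      Complex.exp (-(Complex.I * ((⟪p, y - x⟫ : ℝ) : ℂ))) *
        ((∏ i : Fin (N n), meanCos (a n • (p + stepFreq T ξ (N n) i)) : ℝ) : ℂ)) p) atTop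
      (𝓝 (∫ p : Ed d, Complex.exp (-(Complex.I * ((⟪p, y - x⟫ : ℝ) : ℂ))) *
        ((Real.exp (-(t / 2 * (‖p‖ ^ 2 + 2 * ⟪p, c⟫ + Q))) : ℝ) : ℂ))) := by
    have hphase : ∀ p : Ed d, ‖Complex.exp (-(Complex.I * ((⟪p, y - x⟫ : ℝ) : ℂ)))‖ = 1 := by
      intro p
      rw [← mul_neg, mul_comm, ← Complex.ofReal_neg, Complex.norm_exp_ofReal_mul_I]
    refine tendsto_integral_filter_of_dominated_convergence
      (fun p => Real.exp (cosRate d * (2 * t * d) * B ^ 2) *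
        Real.exp (-(cosRate d * (t * d / 2) / 2) * ‖p‖ ^ 2)) ?_ ?_ ?_ ?_
    · refine Eventually.of_forall fun n => ?_
      refine (Continuous.aestronglyMeasurable ?_).indicator ?_
      · unfold meanCos
        fun_prop
      · exact (measurable_const_smul (a n)) (measurableSet_halfCell i₀)
    · have haB : ∀ᶠ n in atTop, a n * B ≤ π / 6 := by
        have : Tendsto (fun n => a n * B) atTop (𝓝 0) := by
          simpa using h.spacing_tendsto.mul_const B
        exact this.eventually_le_const (by positivity)
      filter_upwards [haB, h.time_tendsto.eventually_lt_const (u := 2 * t) (by linarith),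
        h.time_tendsto.eventually_const_lt (u := t / 2) (by linarith)] with n h1 h2 h3
      refine Eventually.of_forall fun p => ?_
      rw [div_lt_iff₀ hd] at h2
      rw [lt_div_iff₀ hd] at h3
      by_cases hp : a n • p ∈ halfCell i₀
      · rw [Set.indicator_of_mem (by exact hp), norm_mul, hphase, one_mul, Complex.norm_real,
          Real.norm_eq_abs]
        refine (abs_prod_meanCos_le i₀ (h.spacing_pos n) h1 hp
          fun i => norm_stepFreq_le T ξ (N n) i).trans ?_
        rw [← Real.exp_add, Real.exp_le_exp]
        have e1 := mul_le_mul_of_nonneg_left h2.le (mul_nonneg hκ.le (sq_nonneg B))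
        have e2 := mul_le_mul_of_nonneg_left h3.le (mul_nonneg hκ.le (sq_nonneg ‖p‖))
        linarith
      · rw [Set.indicator_of_notMem (by exact hp), norm_zero]
        positivity
    · exact (integrable_exp_neg_mul_norm_sq (by positivity)).const_mul _
    · refine Eventually.of_forall fun p => ?_
      have hprod := tendsto_prod_meanCos (B := ‖p‖ + B) h.spacing_pos h.spacing_tendsto
        h.time_tendsto (u := fun n i => p + stepFreq T ξ (N n) i)
        (fun n i => (norm_add_le _ _).trans (by gcongr; exact norm_stepFreq_le T ξ (N n) i))
        (tendsto_sum_norm_add_stepFreq_sq hT ξ p h.steps_tendsto h.time_tendsto)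
      refine (((Complex.continuous_ofReal.tendsto _).comp hprod).const_mul _).congr' ?_
      filter_upwards [eventually_smul_mem_halfCell i₀ h.spacing_tendsto p] with n hn
      rw [Set.indicator_of_mem (by exact hn)]
      rfl
  have hmain := (hlim.const_mul ((2 / (2 * π) ^ d : ℝ) : ℂ)).const_mul
    (Complex.exp (Complex.I * ((∑ j, ⟪ξ j, x⟫ : ℝ) : ℂ)))
  rw [integral_cexp_shifted_gaussian ht] at hmain
  have hvalue : Complex.exp (Complex.I * ((∑ j, ⟪ξ j, x⟫ : ℝ) : ℂ)) *
      (2 * ((((2 * π * t) ^ (-(d : ℝ) / 2) * Real.exp (-‖y - x‖ ^ 2 / (2 * t)) : ℝ) : ℂ) *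
        Complex.exp (((-(t / 2) * (Q - ‖c‖ ^ 2) : ℝ) : ℂ) +
          Complex.I * ((⟪c, y - x⟫ : ℝ) : ℂ)))) =
      2 * ((((2 * π * t) ^ (-(d : ℝ) / 2) * Real.exp (-‖x - y‖ ^ 2 / (2 * t)) : ℝ) : ℂ) *
        Complex.exp (((-(t / 2) * (Q - ‖c‖ ^ 2) : ℝ) : ℂ) +
          Complex.I * ((∑ j, ⟪ξ j, (1 - T j) • x + T j • y⟫ : ℝ) : ℂ))) := by
    have e1 : ∑ j, ⟪ξ j, (1 - T j) • x + T j • y⟫ = ∑ j, ⟪ξ j, x⟫ + ⟪c, y - x⟫ := by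
      rw [hc, sum_inner, ← Finset.sum_add_distrib]
      refine Finset.sum_congr rfl fun j _ => ?_
      simp only [inner_add_right, inner_sub_right, real_inner_smul_right, real_inner_smul_left]
      ring
    rw [e1, Complex.ofReal_add (∑ j, ⟪ξ j, x⟫), mul_add, add_left_comm, Complex.exp_add
      (Complex.I * ((∑ j, ⟪ξ j, x⟫ : ℝ) : ℂ)), norm_sub_rev y x]
    ring
  rw [hvalue] at hmain
  refine hmain.congr fun n => ?_
  rw [integral_cexp_VxyaN i₀ (h.spacing_pos n) (h.displacement n) (h.parity n) hT ξ]

/-- The position after `n` steps of the path started at `x` with increments `v`. -/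
def partialPt {N : ℕ} (x : Ed d) (v : Fin N → Ed d) (n : ℕ) : Ed d :=
  x + ∑ i : Fin N, if (i : ℕ) < n then v i else 0

lemma pwLinE_apply_of_mem {N : ℕ} (x : Ed d) (v : Fin N → Ed d) {n : ℕ} {t : unitInterval}
    (h1 : (n : ℝ) ≤ N * t) (h2 : N * (t : ℝ) ≤ n + 1) :
    pwLinE x N v t = partialPt x v n +
      (N * (t : ℝ) - n) • (partialPt x v (n + 1) - partialPt x v n) := by
  show x + ∑ i : Fin N, clamp01 ((N : ℝ) * (t : ℝ) - ((i : ℕ) : ℝ)) • v i = _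
  simp only [partialPt, add_sub_add_left_eq_sub, ← Finset.sum_sub_distrib, Finset.smul_sum,
    add_assoc, ← Finset.sum_add_distrib]
  congr 1
  refine Finset.sum_congr rfl fun i _ => ?_
  rcases lt_trichotomy (i : ℕ) n with h | h | h
  · have h' : ((i : ℕ) : ℝ) + 1 ≤ n := by exact_mod_cast h
    rw [clamp01_of_one_le (by linarith), if_pos h, if_pos (by omega)]
    simp
  · rw [if_neg (by omega), if_pos (by omega), h, clamp01, max_eq_right (by linarith),
      min_eq_right (by linarith)]
    simp
  · have h' : (n : ℝ) + 1 ≤ ((i : ℕ) : ℝ) := by exact_mod_cast h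
    rw [clamp01_of_nonpos (by linarith), if_neg (by omega), if_neg (by omega)]
    simp

lemma norm_pwLinE_sub_le {N : ℕ} (x c : Ed d) (v : Fin N → Ed d) {t : unitInterval} {δ : ℝ}
    {lo hi : ℕ} (hlh : lo < hi) (h1 : (lo : ℝ) ≤ N * t) (h2 : N * (t : ℝ) ≤ hi)
    (hδ : ∀ n, lo ≤ n → n ≤ hi → ‖partialPt x v n - c‖ ≤ δ) : ‖pwLinE x N v t - c‖ ≤ δ := by
  have ht : (0 : ℝ) ≤ N * t := mul_nonneg N.cast_nonneg t.2.1
  obtain ⟨n, hn1, hn2, hn3, hn4⟩ : ∃ n : ℕ, lo ≤ n ∧ n + 1 ≤ hi ∧ (n : ℝ) ≤ N * t ∧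
      N * (t : ℝ) ≤ n + 1 := by
    by_cases h : ⌊N * (t : ℝ)⌋₊ < hi
    · exact ⟨⌊N * (t : ℝ)⌋₊, Nat.le_floor h1, h, Nat.floor_le ht, (Nat.lt_floor_add_one _).le⟩
    · have h3 : (hi : ℝ) ≤ N * t :=
        (Nat.cast_le.2 (le_of_not_gt h)).trans (Nat.floor_le ht)
      refine ⟨hi - 1, by omega, by omega, ?_, ?_⟩ <;>
        rw [Nat.cast_sub (by omega)] <;> push_cast <;> linarith
  rw [pwLinE_apply_of_mem x v hn3 hn4]
  set r : ℝ := N * t - n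
  have e : partialPt x v n + r • (partialPt x v (n + 1) - partialPt x v n) - c =
      (1 - r) • (partialPt x v n - c) + r • (partialPt x v (n + 1) - c) := by module
  have hr0 : 0 ≤ r := by simp only [r]; linarith
  have hr1 : 0 ≤ 1 - r := by simp only [r]; linarith
  rw [e]
  refine (norm_add_le _ _).trans ?_
  rw [norm_smul, norm_smul, Real.norm_of_nonneg hr0, Real.norm_of_nonneg hr1]
  have a1 := mul_le_mul_of_nonneg_left (hδ n hn1 (by omega)) hr1
  have a2 := mul_le_mul_of_nonneg_left (hδ (n + 1) (by omega) hn2) hr0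
  linarith

/-- The path through the points `vs` at the times `(i + 1) / (K + 1)`, interpolated linearly. -/
def interpolate (x y : Ed d) {K : ℕ} (vs : Fin K → Ed d) : Omega2 x y :=
  pwLin2 x y (K + 1) (fun i => pinPts x y vs ((i : ℕ) + 1) - pinPts x y vs (i : ℕ))
    (pin_telescope x y vs)

/-- The values of a path at the times `(i + 1) / (K + 1)`. -/
def gridValues (K : ℕ) (ω : PathSp d) (i : Fin K) : Ed d := evalAt ω (((i : ℕ) + 1) / (K + 1))

lemma continuous_pinPts (x y : Ed d) {K : ℕ} (j : ℕ) :
    Continuous fun vs : Fin K → Ed d => pinPts x y vs j := by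
  unfold pinPts
  split_ifs <;> fun_prop

lemma continuous_interpolate (x y : Ed d) (K : ℕ) :
    Continuous (interpolate x y : (Fin K → Ed d) → Omega2 x y) := by
  refine Continuous.subtype_mk (ContinuousMap.continuous_of_continuous_uncurry _ ?_) _
  show Continuous fun q : (Fin K → Ed d) × unitInterval => x + ∑ i : Fin (K + 1),
    clamp01 (((K + 1 : ℕ) : ℝ) * (q.2 : ℝ) - ((i : ℕ) : ℝ)) •
      (pinPts x y q.1 ((i : ℕ) + 1) - pinPts x y q.1 (i : ℕ))
  refine continuous_const.add (continuous_finsetSum _ fun i _ => ?_)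
  have h1 : Continuous fun q : (Fin K → Ed d) × unitInterval =>
      clamp01 (((K + 1 : ℕ) : ℝ) * (q.2 : ℝ) - ((i : ℕ) : ℝ)) :=
    clamp01_continuous.comp (by fun_prop)
  exact h1.smul (((continuous_pinPts x y _).comp continuous_fst).sub
    ((continuous_pinPts x y _).comp continuous_fst))

lemma continuous_evalAt (t : ℝ) : Continuous fun ω : PathSp d => evalAt ω t :=
  continuous_eval_const (F := PathSp d) _

lemma continuous_gridValues (K : ℕ) : Continuous (gridValues K : PathSp d → Fin K → Ed d) :=
  continuous_pi fun _ => continuous_evalAt _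

lemma partialPt_pinPts (x y : Ed d) {K : ℕ} (vs : Fin K → Ed d) {n : ℕ} (hn : n ≤ K + 1) :
    partialPt x (fun i : Fin (K + 1) => pinPts x y vs ((i : ℕ) + 1) - pinPts x y vs (i : ℕ)) n =
      pinPts x y vs n := by
  rw [partialPt, Fin.sum_univ_eq_sum_range
    (fun i => if i < n then pinPts x y vs (i + 1) - pinPts x y vs i else 0), ← Finset.sum_filter]
  have : (Finset.range (K + 1)).filter (· < n) = Finset.range n := by
    ext i; simp only [Finset.mem_filter, Finset.mem_range]; omega
  rw [this, Finset.sum_range_sub, pinPts_zero]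
  abel

lemma pinPts_gridValues {x y : Ed d} {K : ℕ} {ω : PathSp d} (h0 : ω 0 = x) (h1 : ω 1 = y) {n : ℕ}
    (hn : n ≤ K + 1) : pinPts x y (gridValues K ω) n = evalAt ω (n / (K + 1)) := by
  unfold pinPts
  split_ifs with hn0 hnK
  · subst hn0
    rw [← h0, evalAt]
    congr 1
    simp
  · rw [gridValues]
    congr 2
    have : 1 ≤ n := by omega
    push_cast [Nat.cast_sub this]
    ring
  · have : n = K + 1 := by omega
    subst this
    rw [← h1, evalAt]
    congr 1
    have : ((K + 1 : ℕ) : ℝ) / (K + 1) = 1 := by push_cast; field_simp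
    rw [this]
    simp

lemma dist_interpolate_gridValues_le {x y : Ed d} {K : ℕ} (ω : Omega2 x y) {δ : ℝ}
    (hδ : ∀ j < K + 1, ∀ s : unitInterval, (j : ℝ) ≤ (K + 1) * s → (K + 1) * (s : ℝ) ≤ j + 1 →
      ‖ω.1 s - evalAt ω.1 (j / (K + 1))‖ ≤ δ) :
    dist ω (interpolate x y (gridValues K ω.1)) ≤ 2 * δ := by
  have hK : (0 : ℝ) < K + 1 := by positivity
  have hδ0 : 0 ≤ δ := by
    refine (norm_nonneg _).trans (hδ 0 (by omega) 0 ?_ ?_) <;> simp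
  rw [Subtype.dist_eq, ContinuousMap.dist_le (by positivity)]
  intro s
  obtain ⟨j, hj, hj1, hj2⟩ : ∃ j < K + 1, (j : ℝ) ≤ (K + 1) * s ∧ (K + 1) * (s : ℝ) ≤ j + 1 := by
    have hs0 : 0 ≤ (K + 1) * (s : ℝ) := mul_nonneg hK.le s.2.1
    by_cases h : ⌊(K + 1) * (s : ℝ)⌋₊ < K + 1
    · exact ⟨_, h, Nat.floor_le hs0, (Nat.lt_floor_add_one _).le⟩
    · refine ⟨K, by omega, ?_, mul_le_of_le_one_right hK.le s.2.2⟩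
      have : ((K + 1 : ℕ) : ℝ) ≤ (K + 1) * s :=
        (Nat.cast_le.2 (le_of_not_gt h)).trans (Nat.floor_le hs0)
      push_cast at this
      linarith
  have hgrid : ∀ n ≤ K + 1, partialPt x (fun i : Fin (K + 1) =>
      pinPts x y (gridValues K ω.1) ((i : ℕ) + 1) - pinPts x y (gridValues K ω.1) (i : ℕ)) n =
      evalAt ω.1 (n / (K + 1)) := fun n hn => by
    rw [partialPt_pinPts x y _ hn, pinPts_gridValues ω.2.1 ω.2.2 hn]
  have hInt : ‖(interpolate x y (gridValues K ω.1)).1 s - evalAt ω.1 (j / (K + 1))‖ ≤ δ := by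
    refine norm_pwLinE_sub_le (N := K + 1) x _ _ (lo := j) (hi := j + 1) (by omega)
      (by push_cast; exact hj1) (by push_cast; exact hj2) fun n hn1 hn2 => ?_
    rw [hgrid n (by omega)]
    rcases (by omega : n = j ∨ n = j + 1) with rfl | rfl
    · simpa using hδ0
    · have hmem : ((j + 1 : ℕ) : ℝ) / (K + 1) ∈ Set.Icc (0 : ℝ) 1 :=
        ⟨by positivity, (div_le_one hK).2 (by exact_mod_cast hj)⟩
      rw [evalAt, Set.projIcc_of_mem _ hmem]
      refine hδ j hj ⟨_, hmem⟩ ?_ ?_ <;> simp only [mul_div_cancel₀ _ hK.ne'] <;> push_cast <;>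
        linarith
  calc dist (ω.1 s) ((interpolate x y (gridValues K ω.1)).1 s)
      ≤ dist (ω.1 s) (evalAt ω.1 (j / (K + 1))) +
        dist ((interpolate x y (gridValues K ω.1)).1 s) (evalAt ω.1 (j / (K + 1))) :=
        dist_triangle_right _ _ _
    _ ≤ δ + δ := by
        rw [dist_eq_norm, dist_eq_norm]
        exact add_le_add (hδ j hj s hj1 hj2) hInt
    _ = _ := by ring

lemma tendsto_interpolate_gridValues {x y : Ed d} (ω : Omega2 x y) :
    Tendsto (fun K : ℕ => interpolate x y (gridValues K ω.1)) atTop (𝓝 ω) := by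
  rw [Metric.tendsto_atTop]
  intro ε hε
  obtain ⟨η, hη, hω⟩ := Metric.uniformContinuous_iff.1
    (CompactSpace.uniformContinuous_of_continuous ω.1.continuous) (ε / 4) (by positivity)
  obtain ⟨K₀, hK₀⟩ := exists_nat_one_div_lt hη
  refine ⟨K₀, fun K hK => ?_⟩
  rw [dist_comm]
  refine (dist_interpolate_gridValues_le (δ := ε / 4) ω fun j hj s h1 h2 => ?_).trans_lt
    (by linarith)
  have hKpos : (0 : ℝ) < K + 1 := by positivity
  have hmem : (j : ℝ) / (K + 1) ∈ Set.Icc (0 : ℝ) 1 :=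
    ⟨by positivity, (div_le_one hKpos).2 (by exact_mod_cast hj.le)⟩
  rw [evalAt, Set.projIcc_of_mem _ hmem, ← dist_eq_norm]
  refine (hω ?_).le
  rw [Subtype.dist_eq, Real.dist_eq]
  have h3 : (1 : ℝ) / (K + 1) < η := lt_of_le_of_lt (by gcongr) hK₀
  refine lt_of_le_of_lt ?_ h3
  have h4 : (s : ℝ) - j / (K + 1) = ((K + 1) * s - j) / (K + 1) := by field_simp
  rw [show |(s : ℝ) - (⟨(j : ℝ) / (K + 1), hmem⟩ : unitInterval)| =
      |(s : ℝ) - j / (K + 1)| from rfl,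
    h4, abs_of_nonneg (div_nonneg (by linarith) hKpos.le)]
  gcongr
  linarith

/-- The number of steps before time `j / (K + 1)`. -/
def blockStart (N K j : ℕ) : ℕ := N * j / (K + 1)

/-- The number of steps needed to cover the time block `[j / (K + 1), (j + 1) / (K + 1)]`. -/
def blockLen (N K j : ℕ) : ℕ := min (N / (K + 1) + 2) (N - blockStart N K j)

/-- The steps covering the time block `[j / (K + 1), (j + 1) / (K + 1)]`. -/
def blockStep (N K j : ℕ) (l : Fin (blockLen N K j)) : Fin N :=
  ⟨blockStart N K j + l, by have := l.2; unfold blockLen at this; omega⟩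

lemma blockStep_injective (N K j : ℕ) : Function.Injective (blockStep N K j) := by
  intro l l' h
  have := congrArg Fin.val h
  simp only [blockStep] at this
  exact Fin.ext (by omega)

lemma norm_le_of_forall_abs_le {v : Ed d} {r : ℝ} (h : ∀ k, |v k| ≤ r) : ‖v‖ ≤ d * r := by
  calc ‖v‖ = ‖∑ k, v k • EuclideanSpace.single k (1 : ℝ)‖ := by
        congr 1
        ext j
        simp [Finset.sum_apply, Pi.single_apply]
    _ ≤ ∑ k, ‖v k • EuclideanSpace.single k (1 : ℝ)‖ := norm_sum_le _ _
    _ ≤ ∑ _k : Fin d, r := Finset.sum_le_sum fun k _ => by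
        rw [norm_smul]; simpa using h k
    _ = _ := by simp

lemma partialPt_sub_blockStart {N : ℕ} (x : Ed d) (v : Fin N → Ed d) (K j : ℕ) {n : ℕ}
    (h1 : blockStart N K j ≤ n) (h2 : n ≤ blockStart N K j + blockLen N K j) :
    partialPt x v n - partialPt x v (blockStart N K j) =
      ∑ l : Fin (blockLen N K j),
        if (l : ℕ) < n - blockStart N K j then v (blockStep N K j l) else 0 := by
  classical
  rw [partialPt, partialPt, add_sub_add_left_eq_sub, ← Finset.sum_sub_distrib]
  have e : ∑ l : Fin (blockLen N K j),
      (if (l : ℕ) < n - blockStart N K j then v (blockStep N K j l) else 0) =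
      ∑ i ∈ Finset.univ.image (blockStep N K j), if (i : ℕ) < n then v i else 0 := by
    rw [Finset.sum_image fun l _ l' _ h => blockStep_injective N K j h]
    refine Finset.sum_congr rfl fun l _ => ?_
    refine if_congr ?_ rfl rfl
    simp only [blockStep]
    omega
  rw [e]
  symm
  refine Finset.sum_subset_zero_on_sdiff (Finset.subset_univ _) (fun i hi => ?_) fun i hi => ?_
  · simp only [Finset.mem_sdiff, Finset.mem_univ, Finset.mem_image, true_and] at hi
    by_cases hin : (i : ℕ) < n
    · have : (i : ℕ) < blockStart N K j := by
        by_contra hge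
        exact hi ⟨⟨i - blockStart N K j, by omega⟩, Fin.ext (by simp only [blockStep]; omega)⟩
      rw [if_pos hin, if_pos this, sub_self]
    · rw [if_neg hin, if_neg (by omega), sub_zero]
  · obtain ⟨l, -, rfl⟩ := Finset.mem_image.1 hi
    have h3 : ¬ ((blockStep N K j l : ℕ) < blockStart N K j) := by simp [blockStep]
    rw [if_neg h3, sub_zero]

lemma norm_partialPt_sub_blockStart_le {a R : ℝ} (ha : 0 < a) {N : ℕ} (x : Ed d)
    (s : Fin N → Fin d × Bool) (K j : ℕ) (hR : ¬ LargeExcursion R (s ∘ blockStep N K j)) {n : ℕ}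
    (h1 : blockStart N K j ≤ n) (h2 : n ≤ blockStart N K j + blockLen N K j) :
    ‖partialPt x (fun i => stepVec a (s i)) n -
      partialPt x (fun i => stepVec a (s i)) (blockStart N K j)‖ ≤ d * (a * R) := by
  refine norm_le_of_forall_abs_le fun k => ?_
  rw [partialPt_sub_blockStart x _ K j h1 h2]
  simp only [LargeExcursion, not_exists, not_and, not_le] at hR
  have h3 := (hR (n - blockStart N K j) (by omega) k).le
  have e : (∑ l : Fin (blockLen N K j),
      if (l : ℕ) < n - blockStart N K j then stepVec a (s (blockStep N K j l)) else 0) k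
      = a * ∑ l : Fin (blockLen N K j), if (l : ℕ) < n - blockStart N K j then
        (latStep ((s ∘ blockStep N K j) l) k : ℝ) else 0 := by
    rw [Finset.mul_sum, WithLp.ofLp_sum, Finset.sum_apply]
    refine Finset.sum_congr rfl fun l _ => ?_
    split_ifs
    · rw [stepVec_apply, Function.comp]
    · simp
  rw [e, abs_mul, abs_of_pos ha]
  gcongr

lemma dist_interpolate_lattice_le {a R : ℝ} (ha : 0 < a) {x y : Ed d} {N K : ℕ} (hN : 0 < N)
    (s : Fin N → Fin d × Bool) (hs : x + ∑ i, stepVec a (s i) = y)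
    (hR : ∀ j < K + 1, ¬ LargeExcursion R (s ∘ blockStep N K j)) :
    dist (pwLin2 x y N (fun i => stepVec a (s i)) hs)
      (interpolate x y (gridValues K (pwLin2 x y N (fun i => stepVec a (s i)) hs).1)) ≤
      4 * (d * (a * R)) := by
  rw [show 4 * (d * (a * R)) = 2 * (2 * (d * (a * R))) by ring]
  refine dist_interpolate_gridValues_le _ fun j hj t h1 h2 => ?_
  have hK : (0 : ℝ) < K + 1 := by positivity
  have hN' : (0 : ℝ) < N := by exact_mod_cast hN
  have hstart : (blockStart N K j : ℝ) ≤ N * (j / (K + 1)) := by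
    rw [blockStart, ← mul_div_assoc]
    exact_mod_cast Nat.cast_div_le (α := ℝ) (m := N * j) (n := K + 1)
  have hlt : blockStart N K j < N := by
    rw [blockStart, Nat.div_lt_iff_lt_mul (by omega)]
    exact Nat.mul_lt_mul_of_pos_left hj hN
  have hlen : 0 < blockLen N K j := lt_min (Nat.succ_pos _) (Nat.sub_pos_of_lt hlt)
  have hend : ∀ r : ℝ, r ≤ 1 → (K + 1) * r ≤ j + 1 →
      N * r ≤ ((blockStart N K j + blockLen N K j : ℕ) : ℝ) := by
    intro r hr1 hr2
    have e1 : (N : ℝ) * r ≤ N := mul_le_of_le_one_right hN'.le hr1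
    have e2 : (N : ℝ) * r ≤ ((blockStart N K j + (N / (K + 1) + 2) : ℕ) : ℝ) := by
      have c1 : N * j < (blockStart N K j + 1) * (K + 1) := by
        rw [mul_comm _ (K + 1)]; exact Nat.lt_mul_div_succ _ K.succ_pos
      have c2 : N < (N / (K + 1) + 1) * (K + 1) := by
        rw [mul_comm]; exact Nat.lt_mul_div_succ _ K.succ_pos
      have c1' : (N : ℝ) * j < (blockStart N K j + 1) * (K + 1) := by exact_mod_cast c1
      have c2' : (N : ℝ) < (((N / (K + 1) : ℕ) : ℝ) + 1) * (K + 1) := by exact_mod_cast c2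
      push_cast
      have c3 : N * ((K + 1) * r) ≤ N * (j + 1) := by gcongr
      by_contra hcon
      push Not at hcon
      have := mul_lt_mul_of_pos_left hcon hK
      nlinarith
    have e3 : blockStart N K j + blockLen N K j =
        min (blockStart N K j + (N / (K + 1) + 2)) N := by
      unfold blockLen; omega
    rw [e3, Nat.cast_min]
    exact le_min e2 e1
  have hclose : ∀ r : unitInterval, (j : ℝ) ≤ (K + 1) * r → (K + 1) * (r : ℝ) ≤ j + 1 →
      ‖pwLinE x N (fun i => stepVec a (s i)) r -
        partialPt x (fun i => stepVec a (s i)) (blockStart N K j)‖ ≤ d * (a * R) := by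
    intro r hr1 hr2
    refine norm_pwLinE_sub_le x _ _ (lo := blockStart N K j)
      (hi := blockStart N K j + blockLen N K j) (by omega) (hstart.trans ?_) (hend r r.2.2 hr2)
      fun n hn1 hn2 => norm_partialPt_sub_blockStart_le ha x s K j (hR j hj) hn1 hn2
    gcongr
    rwa [div_le_iff₀' hK]
  have hmem : (j : ℝ) / (K + 1) ∈ Set.Icc (0 : ℝ) 1 :=
    ⟨by positivity, (div_le_one hK).2 (by exact_mod_cast hj.le)⟩
  have h3 := hclose t h1 h2
  have h4 := hclose ⟨_, hmem⟩ (by simp only [mul_div_cancel₀ _ hK.ne']; exact le_rfl)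
    (by simp only [mul_div_cancel₀ _ hK.ne']; linarith)
  rw [evalAt, Set.projIcc_of_mem _ hmem, ← dist_eq_norm]
  rw [← dist_eq_norm] at h3 h4
  refine (dist_triangle_right _ _ (partialPt x (fun i => stepVec a (s i))
    (blockStart N K j))).trans ?_
  linarith! [h3, h4]

lemma blockLen_le {N K : ℕ} (hNK : 2 * (K + 1) ≤ N) (j : ℕ) :
    (blockLen N K j : ℝ) ≤ 2 * N / (K + 1) := by
  have hK : (0 : ℝ) < K + 1 := by positivity
  have h1 : (blockLen N K j : ℝ) ≤ ((N / (K + 1) : ℕ) : ℝ) + 2 := by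
    exact_mod_cast min_le_left _ _
  have h2 : ((N / (K + 1) : ℕ) : ℝ) ≤ N / (K + 1) := by
    exact_mod_cast Nat.cast_div_le (α := ℝ) (m := N) (n := K + 1)
  have h3 : (2 : ℝ) ≤ N / (K + 1) := by
    rw [le_div_iff₀ hK]; exact_mod_cast hNK
  rw [mul_div_assoc]
  linarith

open Classical in
lemma sum_pinned_largeExcursion_le (i₀ : Fin d) {R : ℝ} (hR : 0 ≤ R) {N K : ℕ} (hK : 3 ≤ K)
    (hNK : 2 * (K + 1) ≤ N) (j : ℕ) (z : Fin d → ℤ) :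
    (∑ s : Fin N → Fin d × Bool, if ∑ i, latStep (s i) = z then
      (if LargeExcursion R (s ∘ blockStep N K j) then (1 : ℝ) else 0) else 0) ≤
      2 * d * lltConst i₀ * ((N : ℝ) / 2) ^ (-(d : ℝ) / 2) *
        Real.exp (-(R ^ 2 * (K + 1) / (4 * N))) * (2 * d : ℝ) ^ N := by
  have hN : (0 : ℝ) < N := by exact_mod_cast (by omega : 0 < N)
  have hC := lltConst_pos i₀
  set M := blockLen N K j
  have hM := blockLen_le hNK j
  have hMN : M ≤ N := (min_le_right _ _).trans (Nat.sub_le _ _)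
  have hM2 : (M : ℝ) ≤ N / 2 := by
    refine hM.trans ?_
    rw [div_le_div_iff₀ (by positivity) (by norm_num)]
    have : (3 : ℝ) ≤ K := by exact_mod_cast hK
    nlinarith
  refine (sum_pinned_le i₀ (blockStep N K j) (blockStep_injective N K j)
    (fun u => if LargeExcursion R u then (1 : ℝ) else 0)
    (fun u => by split_ifs <;> norm_num) z).trans ?_
  calc _ ≤ (2 * d * Real.exp (-(R ^ 2 / (2 * (2 * N / (K + 1))))) * (2 * d : ℝ) ^ M) *
        (lltConst i₀ * ((N : ℝ) / 2) ^ (-(d : ℝ) / 2) * (2 * d : ℝ) ^ (N - M)) := by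
        have h1 := sum_largeExcursion_le (d := d) (M := M) (Fin.pos i₀) hR
          (L := 2 * N / (K + 1)) (by positivity) hM
        have h2 : (((N - M : ℕ) : ℝ) + 1) ^ (-(d : ℝ) / 2) ≤ ((N : ℝ) / 2) ^ (-(d : ℝ) / 2) := by
          refine Real.rpow_le_rpow_of_nonpos (by positivity) ?_
            (by have : (0 : ℝ) ≤ d := d.cast_nonneg
                linarith)
          rw [Nat.cast_sub hMN]; linarith
        gcongr
    _ = 2 * d * lltConst i₀ * ((N : ℝ) / 2) ^ (-(d : ℝ) / 2) *
          Real.exp (-(R ^ 2 / (2 * (2 * N / (K + 1))))) *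
        ((2 * d : ℝ) ^ M * (2 * d : ℝ) ^ (N - M)) := by ring
    _ = _ := by
        rw [← pow_add, Nat.add_sub_cancel' hMN]
        congr 3
        field_simp
        ring

lemma VxyaN_interpolation_error_le [NeZero d] (i₀ : Fin d) {x y : Ed d} {a : ℝ} (ha : 0 < a)
    {z : Fin d → ℤ} (hz : ∀ k, (y - x) k = a * z k) {N K : ℕ} (hK : 3 ≤ K)
    (hNK : 2 * (K + 1) ≤ N) {ε : ℝ} (hε : 0 < ε) :
    (VxyaN x y a N).real {ω | ε < dist ω (interpolate x y (gridValues K ω.1))} ≤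
      (K + 1) * (2 * d * lltConst i₀ * (N * a ^ 2 / 2) ^ (-(d : ℝ) / 2) *
        Real.exp (-(ε ^ 2 * (K + 1) / (64 * d ^ 2 * (N * a ^ 2))))) := by
  classical
  have hd : (0 : ℝ) < d := by exact_mod_cast NeZero.pos d
  have hN0 : 0 < N := by omega
  have hN : (0 : ℝ) < N := by exact_mod_cast hN0
  set R := ε / (4 * (d * a)) with hR
  have hR0 : 0 ≤ R := by positivity
  have hmeas : MeasurableSet {ω : Omega2 x y | ε < dist ω (interpolate x y (gridValues K ω.1))} :=
    (isOpen_lt continuous_const (continuous_id.dist ((continuous_interpolate x y K).comp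
      ((continuous_gridValues K).comp continuous_subtype_val)))).measurableSet
  let G : PathSp d → ℝ := fun p => if ∃ h : p 0 = x ∧ p 1 = y,
    ε < dist (⟨p, h⟩ : Omega2 x y) (interpolate x y (gridValues K p)) then 1 else 0
  have hG : (VxyaN x y a N).real {ω | ε < dist ω (interpolate x y (gridValues K ω.1))} =
      ∫ ω, G ω.1 ∂(VxyaN x y a N) := by
    rw [← integral_indicator_one hmeas]
    refine integral_congr_ae (ae_of_all _ fun ω => ?_)
    simp only [G, Set.indicator_apply, Set.mem_ofPred_eq, Pi.one_apply]
    refine if_congr ⟨fun h => ⟨ω.2, h⟩, fun ⟨_, h⟩ => h⟩ rfl rfl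
  rw [hG, integral_VxyaN ha hz, smul_eq_mul]
  have hterm : ∀ s : Fin N → Fin d × Bool,
      (if ∑ i, latStep (s i) = z then G (pwLinE x N fun i => stepVec a (s i)) else 0) ≤
      ∑ j ∈ Finset.range (K + 1), if ∑ i, latStep (s i) = z then
        (if LargeExcursion R (s ∘ blockStep N K j) then (1 : ℝ) else 0) else 0 := by
    intro s
    by_cases hs : ∑ i, latStep (s i) = z
    · simp only [if_pos hs]
      have hs' := (sum_stepVec_eq_iff ha.ne' hz s).2 hs
      by_cases hex : ∃ j ∈ Finset.range (K + 1), LargeExcursion R (s ∘ blockStep N K j)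
      · obtain ⟨j, hj, hex⟩ := hex
        refine le_trans (b := 1) (by simp only [G]; split_ifs <;> norm_num) ?_
        refine le_trans (by rw [if_pos hex]) (Finset.single_le_sum
          (f := fun j => if LargeExcursion R (s ∘ blockStep N K j) then (1 : ℝ) else 0)
          (fun i _ => by positivity) hj)
      · push Not at hex
        have hdist := dist_interpolate_lattice_le (K := K) ha hN0 s hs'
          fun j hj => hex j (Finset.mem_range.2 hj)
        have e : 4 * (d * (a * R)) = ε := by rw [hR]; field_simp
        rw [e] at hdist
        have : G (pwLinE x N fun i => stepVec a (s i)) = 0 :=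
          if_neg fun ⟨_, h⟩ => absurd hdist (not_le.2 h)
        rw [this]
        exact Finset.sum_nonneg fun i _ => by positivity
    · simp [hs]
  have hsum : (∑ s : Fin N → Fin d × Bool,
      if ∑ i, latStep (s i) = z then G (pwLinE x N fun i => stepVec a (s i)) else 0) ≤
      (K + 1) * (2 * d * lltConst i₀ * ((N : ℝ) / 2) ^ (-(d : ℝ) / 2) *
        Real.exp (-(R ^ 2 * (K + 1) / (4 * N))) * (2 * d : ℝ) ^ N) := by
    refine (Finset.sum_le_sum fun s _ => hterm s).trans ?_
    rw [Finset.sum_comm]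
    refine (Finset.sum_le_sum fun j _ => sum_pinned_largeExcursion_le i₀ hR0 hK hNK j z).trans ?_
    simp
  refine (mul_le_mul_of_nonneg_left hsum (by positivity)).trans_eq ?_
  have e1 : (N * a ^ 2 / 2) ^ (-(d : ℝ) / 2) =
      a ^ (-(d : ℝ)) * ((N : ℝ) / 2) ^ (-(d : ℝ) / 2) := by
    rw [show N * a ^ 2 / 2 = a ^ 2 * ((N : ℝ) / 2) by ring,
      Real.mul_rpow (by positivity) (by positivity), ← Real.rpow_natCast a 2,
      ← Real.rpow_mul ha.le]
    congr 2
    push_cast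
    ring
  have e2 : R ^ 2 * (K + 1) / (4 * N) = ε ^ 2 * (K + 1) / (64 * d ^ 2 * (N * a ^ 2)) := by
    rw [hR]; field_simp; ring
  rw [e1, e2]
  field_simp

lemma DiffusiveScaling.eventually_interpolation_error_le [NeZero d] {x y : Ed d} {t : ℝ}
    {a : ℕ → ℝ} {N : ℕ → ℕ} {z : ℕ → Fin d → ℤ} (h : DiffusiveScaling x y t a N z)
    {ε η : ℝ} (hε : 0 < ε) (hη : 0 < η) :
    ∀ᶠ K in atTop, ∀ᶠ n in atTop,
      (VxyaN x y (a n) (N n)).real {ω | ε < dist ω (interpolate x y (gridValues K ω.1))} ≤ η := by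
  have hd : (0 : ℝ) < d := by exact_mod_cast NeZero.pos d
  have ht := h.time_pos
  let i₀ : Fin d := ⟨0, NeZero.pos d⟩
  let B : ℕ → ℝ → ℝ := fun K u => (K + 1) * (2 * d * lltConst i₀ * (u / 2) ^ (-(d : ℝ) / 2) *
        Real.exp (-(ε ^ 2 * (K + 1) / (64 * d ^ 2 * u))))
  have htd : 0 < t * d := by positivity
  have hu : Tendsto (fun n => N n * a n ^ 2) atTop (𝓝 (t * d)) := by
    refine (h.time_tendsto.mul_const (d : ℝ)).congr fun n => ?_
    field_simp
  have hB : Tendsto (fun K => B K (t * d)) atTop (𝓝 0) := by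
    have hb : 0 < ε ^ 2 / (64 * d ^ 2 * (t * d)) := by positivity
    have h1 := ((Real.tendsto_pow_mul_exp_neg_atTop_nhds_zero 1).comp
      (((tendsto_natCast_atTop_atTop (R := ℝ)).atTop_add tendsto_const_nhds
        (C := (1 : ℝ))).const_mul_atTop hb)).const_mul
      (2 * d * lltConst i₀ * (t * d / 2) ^ (-(d : ℝ) / 2) * (64 * d ^ 2 * (t * d) / ε ^ 2))
    rw [mul_zero] at h1
    refine h1.congr fun K => ?_
    simp only [Function.comp, pow_one, B]
    rw [show ε ^ 2 / (64 * d ^ 2 * (t * d)) * (K + 1) = ε ^ 2 * (K + 1) / (64 * d ^ 2 * (t * d))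
      by ring]
    field_simp
  filter_upwards [hB.eventually_lt_const hη, eventually_ge_atTop 3] with K hKB hK
  have hBK : Tendsto (fun n => B K (N n * a n ^ 2)) atTop (𝓝 (B K (t * d))) := by
    suffices hc : ContinuousAt (B K) (t * d) from hc.tendsto.comp hu
    have c1 : ContinuousAt (fun u : ℝ => (u / 2) ^ (-(d : ℝ) / 2)) (t * d) :=
      (continuousAt_id.div_const 2).rpow_const (Or.inl (by positivity))
    have c2 : ContinuousAt (fun u : ℝ => ε ^ 2 * (K + 1) / (64 * d ^ 2 * u)) (t * d) :=
      continuousAt_const.div (continuousAt_const.mul continuousAt_id) (by positivity)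
    exact continuousAt_const.mul ((continuousAt_const.mul c1).mul c2.neg.rexp)
  filter_upwards [hBK.eventually_lt_const hKB, h.steps_tendsto.eventually_ge_atTop (2 * (K + 1))]
    with n hn1 hn2
  exact (VxyaN_interpolation_error_le i₀ (h.spacing_pos n) (h.displacement n) hK hn2 hε).trans
    hn1.le

lemma tendsto_integral_normalize {Ω F : Type*} [Nonempty Ω] [MeasurableSpace Ω]
    [NormedAddCommGroup F] [NormedSpace ℝ F] {μ : ℕ → FiniteMeasure Ω} {ν : FiniteMeasure Ω}
    (hν : ν ≠ 0) (hmass : Tendsto (fun n => (μ n).mass) atTop (𝓝 ν.mass)) {g : Ω → F}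
    (h : Tendsto (fun n => ∫ ω, g ω ∂(μ n : Measure Ω)) atTop (𝓝 (∫ ω, g ω ∂(ν : Measure Ω)))) :
    Tendsto (fun n => ∫ ω, g ω ∂((μ n).normalize : Measure Ω)) atTop
      (𝓝 (∫ ω, g ω ∂(ν.normalize : Measure Ω))) := by
  have hmν : ν.mass ≠ 0 := ν.mass_nonzero_iff.2 hν
  have hreal : ∀ ρ : FiniteMeasure Ω, (ρ : Measure Ω).real univ = (ρ.mass : ℝ) := fun ρ => rfl
  have hm : Tendsto (fun n => ((μ n).mass : ℝ)⁻¹) atTop (𝓝 (ν.mass : ℝ)⁻¹) :=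
    ((NNReal.continuous_coe.tendsto _).comp hmass).inv₀ (by exact_mod_cast hmν)
  rw [← ν.average_eq_integral_normalize hν, average_eq, hreal]
  refine (hm.smul h).congr' ?_
  filter_upwards [hmass.eventually_ne hmν] with n hn
  rw [← (μ n).average_eq_integral_normalize ((μ n).mass_nonzero_iff.1 hn), average_eq, hreal]

/-- **Lévy's convergence theorem** for finite measures with nonzero limit. -/
lemma tendsto_finiteMeasure_of_tendsto_charFun {E : Type*} [NormedAddCommGroup E]
    [InnerProductSpace ℝ E] [FiniteDimensional ℝ E] [MeasurableSpace E] [BorelSpace E]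
    {μ : ℕ → FiniteMeasure E} {ν : FiniteMeasure E} (hν : ν ≠ 0)
    (h : ∀ ξ, Tendsto (fun n => charFun (μ n : Measure E) ξ) atTop
      (𝓝 (charFun (ν : Measure E) ξ))) :
    Tendsto μ atTop (𝓝 ν) := by
  have hmass : Tendsto (fun n => (μ n).mass) atTop (𝓝 ν.mass) := by
    have h0 := (Complex.continuous_re.tendsto _).comp (h 0)
    simp only [Function.comp_def, charFun_zero, Complex.ofReal_re] at h0
    exact NNReal.tendsto_coe.1 h0
  refine (FiniteMeasure.tendsto_normalize_iff_tendsto hν).1 ⟨?_, hmass⟩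
  refine ProbabilityMeasure.tendsto_of_tendsto_charFun fun ξ => ?_
  simp only [charFun_apply] at h ⊢
  exact tendsto_integral_normalize hν hmass (h ξ)

lemma tendsto_finiteMeasure_of_forall_lipschitz {Ω : Type*} [Nonempty Ω] [MeasurableSpace Ω]
    [PseudoEMetricSpace Ω] [OpensMeasurableSpace Ω] {μ : ℕ → FiniteMeasure Ω}
    {ν : FiniteMeasure Ω} (hν : ν ≠ 0)
    (h : ∀ f : Ω → ℝ, (∃ C : ℝ, ∀ ω ω', dist (f ω) (f ω') ≤ C) → (∃ L, LipschitzWith L f) →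
      Tendsto (fun n => ∫ ω, f ω ∂(μ n : Measure Ω)) atTop (𝓝 (∫ ω, f ω ∂(ν : Measure Ω)))) :
    Tendsto μ atTop (𝓝 ν) := by
  have hmass : Tendsto (fun n => (μ n).mass) atTop (𝓝 ν.mass) := by
    have h0 := h (fun _ => 1) ⟨0, by simp⟩ ⟨0, LipschitzWith.const 1⟩
    simp only [integral_const, smul_eq_mul, mul_one] at h0
    exact NNReal.tendsto_coe.1 h0
  refine (FiniteMeasure.tendsto_normalize_iff_tendsto hν).1 ⟨?_, hmass⟩
  refine tendsto_iff_forall_lipschitz_integral_tendsto.2 fun f hb hl => ?_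
  exact tendsto_integral_normalize hν hmass (h f hb hl)

variable {x y : Ed d} {t : ℝ} {a : ℕ → ℝ} {N : ℕ → ℕ} {z : ℕ → Fin d → ℤ}
  {Wt : ℝ → Measure (Omega2 x y)}

lemma IsPinnedWienerFamily.measure_ne_zero (hWt : IsPinnedWienerFamily x y Wt) (ht : 0 < t) :
    Wt t ≠ 0 := by
  intro h0
  have h := (hWt t ht).2 0 (fun _ => 0) rfl (by simp) one_pos Fin.elim0
  simp only [h0, integral_zero_measure, Finset.univ_eq_empty, Finset.sum_empty] at h
  refine mul_ne_zero ?_ (Complex.exp_ne_zero _) h.symm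
  have : (0 : ℝ) < (2 * π * t) ^ (-(d : ℝ) / 2) * Real.exp (-‖x - y‖ ^ 2 / (2 * t)) := by
    positivity
  exact Complex.ofReal_ne_zero.2 this.ne'

lemma DiffusiveScaling.tendsto_integral_cexp_gridValues [NeZero d]
    (h : DiffusiveScaling x y t a N z) (hWt : IsPinnedWienerFamily x y Wt) {K : ℕ}
    (ξ : Fin K → Ed d) :
    Tendsto (fun n => ∫ ω, Complex.exp (Complex.I * ((∑ j, ⟪ξ j, gridValues K ω.1 j⟫ : ℝ) : ℂ))
        ∂(VxyaN x y (a n) (N n))) atTop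
      (𝓝 (2 * ∫ ω, Complex.exp (Complex.I * ((∑ j, ⟪ξ j, gridValues K ω.1 j⟫ : ℝ) : ℂ))
        ∂(Wt t))) := by
  have hK : (0 : ℝ) < K + 1 := by positivity
  let ts : ℕ → ℝ := fun i => i / (K + 1)
  have h0 : ts 0 = 0 := by simp [ts]
  have hlt : ∀ i < K, ts i < ts (i + 1) := fun i _ => by
    simp only [ts]; gcongr; simp
  have h1 := (hWt t h.time_pos).2 K ts h0 hlt (by simp only [ts]; rw [div_lt_one hK]; simp) ξ
  have h2 := h.tendsto_integral_cexp (T := fun j : Fin K => ts (j + 1))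
    (fun j => ⟨by simp only [ts]; positivity, by
      simp only [ts]; rw [div_le_one hK]; exact_mod_cast (by omega : (j : ℕ) + 1 ≤ K + 1)⟩) ξ
  have hgrid : ∀ (ω : PathSp d) (j : Fin K), gridValues K ω j = evalAt ω (ts (j + 1)) :=
    fun ω j => by simp [gridValues, ts]
  simp only [hgrid]
  rw [h1, sum_mul_norm_sum_Ici_sq h0 hlt ξ]
  exact h2

lemma DiffusiveScaling.tendsto_integral_gridValues [NeZero d]
    (h : DiffusiveScaling x y t a N z) (hWt : IsPinnedWienerFamily x y Wt) {K : ℕ}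
    (g : BoundedContinuousFunction (Fin K → Ed d) ℝ) :
    Tendsto (fun n => ∫ ω, g (gridValues K ω.1) ∂(VxyaN x y (a n) (N n))) atTop
      (𝓝 (2 * ∫ ω, g (gridValues K ω.1) ∂(Wt t))) := by
  have := (hWt t h.time_pos).1
  let E := PiLp 2 fun _ : Fin K => Ed d
  let ev : Omega2 x y → E := fun ω => WithLp.toLp 2 (gridValues K ω.1)
  have hev : Continuous ev := (PiLp.continuous_toLp 2 _).comp
    ((continuous_gridValues K).comp continuous_subtype_val)
  let μ : ℕ → FiniteMeasure E := fun n => ⟨(VxyaN x y (a n) (N n)).map ev, inferInstance⟩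
  let ν : FiniteMeasure E := ⟨((2 : ℝ≥0∞) • Wt t).map ev,
    haveI : IsFiniteMeasure ((2 : ℝ≥0∞) • Wt t) := Measure.smul_finite _ (by norm_num)
    inferInstance⟩
  have hν : ν ≠ 0 := by
    intro h0
    have h1 : ((2 : ℝ≥0∞) • Wt t).map ev = 0 :=
      congrArg (fun ρ : FiniteMeasure E => (ρ : Measure E)) h0
    rw [Measure.map_eq_zero_iff hev.aemeasurable] at h1
    refine hWt.measure_ne_zero h.time_pos ?_
    simpa using h1
  have hlim : Tendsto μ atTop (𝓝 ν) := by
    refine tendsto_finiteMeasure_of_tendsto_charFun hν fun ξ => ?_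
    have hcf : ∀ ρ : Measure (Omega2 x y), charFun (ρ.map ev) ξ = ∫ ω, Complex.exp (Complex.I *
        ((∑ j, ⟪ξ j, gridValues K ω.1 j⟫ : ℝ) : ℂ)) ∂ρ := by
      intro ρ
      rw [charFun_apply, integral_map hev.aemeasurable (by fun_prop)]
      refine integral_congr_ae (ae_of_all _ fun ω => ?_)
      change Complex.exp ((⟪ev ω, ξ⟫ : ℝ) * Complex.I) = _
      rw [mul_comm, real_inner_comm, PiLp.inner_apply]
    change Tendsto (fun n => charFun ((VxyaN x y (a n) (N n)).map ev) ξ) atTop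
      (𝓝 (charFun (((2 : ℝ≥0∞) • Wt t).map ev) ξ))
    simp only [hcf, integral_smul_measure]
    simpa using h.tendsto_integral_cexp_gridValues hWt fun j => ξ j
  let g' : BoundedContinuousFunction E ℝ := g.compContinuous ⟨_, PiLp.continuous_ofLp 2 _⟩
  have h1 := FiniteMeasure.tendsto_iff_forall_integral_tendsto.1 hlim g'
  have hInt : ∀ ρ : Measure (Omega2 x y), ∫ v, g' v ∂(ρ.map ev) = ∫ ω, g (gridValues K ω.1) ∂ρ :=
    fun ρ => by
      rw [integral_map hev.aemeasurable g'.continuous.aestronglyMeasurable]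
      rfl
  change Tendsto (fun n => ∫ v, g' v ∂((VxyaN x y (a n) (N n)).map ev)) atTop
    (𝓝 (∫ v, g' v ∂(((2 : ℝ≥0∞) • Wt t).map ev))) at h1
  simp only [hInt, integral_smul_measure] at h1
  simpa using h1

instance (x y : Ed d) : Nonempty (Omega2 x y) := ⟨interpolate x y (K := 0) Fin.elim0⟩

lemma continuous_interpolate_gridValues (x y : Ed d) (K : ℕ) :
    Continuous fun ω : Omega2 x y => interpolate x y (gridValues K ω.1) :=
  (continuous_interpolate x y K).comp ((continuous_gridValues K).comp continuous_subtype_val)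

lemma abs_integral_sub_integral_interpolate_le (μ : Measure (Omega2 x y)) [IsFiniteMeasure μ]
    {f : Omega2 x y → ℝ} {C : ℝ} (hC : ∀ ω ω', dist (f ω) (f ω') ≤ C) {L : NNReal}
    (hL : LipschitzWith L f) (K : ℕ) {ε : ℝ} (hε : 0 ≤ ε) :
    |∫ ω, f ω ∂μ - ∫ ω, f (interpolate x y (gridValues K ω.1)) ∂μ| ≤
      L * ε * μ.real univ +
        C * μ.real {ω | ε < dist ω (interpolate x y (gridValues K ω.1))} := by
  obtain ⟨ω₀⟩ := (inferInstance : Nonempty (Omega2 x y))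
  have hC0 : 0 ≤ C := dist_nonneg.trans (hC ω₀ ω₀)
  have hb : ∀ ω, ‖f ω‖ ≤ ‖f ω₀‖ + C := fun ω => by
    have h1 := hC ω ω₀
    rw [dist_eq_norm] at h1
    linarith [norm_le_norm_add_norm_sub' (f ω) (f ω₀)]
  have hP := continuous_interpolate_gridValues x y K
  have hmeas : MeasurableSet {ω : Omega2 x y | ε < dist ω (interpolate x y (gridValues K ω.1))} :=
    (isOpen_lt continuous_const (continuous_id.dist hP)).measurableSet
  have hi1 : Integrable f μ := Integrable.of_bound hL.continuous.aestronglyMeasurable _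
    (ae_of_all _ hb)
  have hi2 : Integrable (fun ω => f (interpolate x y (gridValues K ω.1))) μ :=
    Integrable.of_bound (hL.continuous.comp hP).aestronglyMeasurable _ (ae_of_all _ fun _ => hb _)
  have hi3 : Integrable ({ω : Omega2 x y |
      ε < dist ω (interpolate x y (gridValues K ω.1))}.indicator
      fun _ => C) μ := (integrable_const C).indicator hmeas
  rw [← integral_sub hi1 hi2]
  refine (abs_integral_le_integral_abs).trans ?_
  calc _ ≤ ∫ ω, (L * ε + {ω : Omega2 x y | ε < dist ω
        (interpolate x y (gridValues K ω.1))}.indicator (fun _ => C) ω) ∂μ := by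
        refine integral_mono (hi1.sub hi2).abs ((integrable_const _).add hi3) fun ω => ?_
        by_cases hω : ε < dist ω (interpolate x y (gridValues K ω.1))
        · rw [Set.indicator_of_mem (by exact hω), ← Real.dist_eq]
          exact (hC _ _).trans (le_add_of_nonneg_left (by positivity))
        · rw [Set.indicator_of_notMem (by exact hω), add_zero, ← Real.dist_eq]
          push Not at hω
          exact (hL.dist_le_mul _ _).trans (by gcongr)
    _ = _ := by
        rw [integral_add (integrable_const _) hi3, integral_indicator_const _ hmeas]
        simp
        ring

/-- At a fixed time, the lattice path measures converge weakly to twice the pinned Wiener measure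
along step numbers of the right parity. -/
lemma DiffusiveScaling.tendsto_integral [NeZero d] (h : DiffusiveScaling x y t a N z)
    (hWt : IsPinnedWienerFamily x y Wt) (f : BoundedContinuousFunction (Omega2 x y) ℝ) :
    Tendsto (fun n => ∫ ω, f ω ∂(VxyaN x y (a n) (N n))) atTop (𝓝 (2 * ∫ ω, f ω ∂(Wt t))) := by
  have := (hWt t h.time_pos).1
  have h2fin : IsFiniteMeasure ((2 : ℝ≥0∞) • Wt t) := Measure.smul_finite _ (by norm_num)
  let μ : ℕ → FiniteMeasure (Omega2 x y) := fun n => ⟨VxyaN x y (a n) (N n), inferInstance⟩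
  let ν : FiniteMeasure (Omega2 x y) := ⟨(2 : ℝ≥0∞) • Wt t, h2fin⟩
  have hν : ν ≠ 0 := by
    intro h0
    have h1 : (2 : ℝ≥0∞) • Wt t = 0 :=
      congrArg (fun ρ : FiniteMeasure (Omega2 x y) => (ρ : Measure (Omega2 x y))) h0
    exact hWt.measure_ne_zero h.time_pos (by simpa using h1)
  suffices hlim : Tendsto μ atTop (𝓝 ν) by
    have h1 := FiniteMeasure.tendsto_iff_forall_integral_tendsto.1 hlim f
    change Tendsto (fun n => ∫ ω, f ω ∂(VxyaN x y (a n) (N n))) atTop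
      (𝓝 (∫ ω, f ω ∂((2 : ℝ≥0∞) • Wt t))) at h1
    simpa [integral_smul_measure] using h1
  refine tendsto_finiteMeasure_of_forall_lipschitz hν ?_
  rintro f ⟨C, hC⟩ ⟨L, hL⟩
  change Tendsto (fun n => ∫ ω, f ω ∂(VxyaN x y (a n) (N n))) atTop
    (𝓝 (∫ ω, f ω ∂((2 : ℝ≥0∞) • Wt t)))
  rw [integral_smul_measure, smul_eq_mul, ENNReal.toReal_ofNat]
  let fb : BoundedContinuousFunction (Omega2 x y) ℝ := ⟨⟨f, hL.continuous⟩, C, hC⟩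
  have hmass : Tendsto (fun n => (VxyaN x y (a n) (N n)).real univ) atTop
      (𝓝 (2 * (Wt t).real univ)) := by
    simpa using h.tendsto_integral_gridValues hWt (K := 0) (BoundedContinuousFunction.const _ 1)
  have hgrid : ∀ K, Tendsto (fun n => ∫ ω, f (interpolate x y (gridValues K ω.1))
      ∂(VxyaN x y (a n) (N n))) atTop
      (𝓝 (2 * ∫ ω, f (interpolate x y (gridValues K ω.1)) ∂(Wt t))) := fun K =>
    h.tendsto_integral_gridValues hWt (fb.compContinuous ⟨_, continuous_interpolate x y K⟩)
  have hW : Tendsto (fun K => 2 * ∫ ω, f (interpolate x y (gridValues K ω.1)) ∂(Wt t)) atTop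
      (𝓝 (2 * ∫ ω, f ω ∂(Wt t))) := by
    refine Tendsto.const_mul 2 (tendsto_integral_of_dominated_convergence (fun _ => ‖fb‖)
      (fun K => (hL.continuous.comp
        (continuous_interpolate_gridValues x y K)).aestronglyMeasurable)
      (integrable_const _) (fun K => ae_of_all _ fun ω => fb.norm_coe_le_norm _)
      (ae_of_all _ fun ω => (hL.continuous.tendsto _).comp (tendsto_interpolate_gridValues ω)))
  rw [Metric.tendsto_nhds]
  intro δ hδ
  obtain ⟨ω₀⟩ := (inferInstance : Nonempty (Omega2 x y))
  have hC0 : 0 ≤ C := dist_nonneg.trans (hC ω₀ ω₀)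
  set m₀ := 2 * (Wt t).real univ + 1
  have hm₀ : 0 < m₀ := by positivity
  set ε := δ / (4 * ((L + 1) * m₀)) with hε
  set η := δ / (4 * (C + 1)) with hη
  have hε0 : 0 < ε := by positivity
  have hη0 : 0 < η := by positivity
  have e1 : L * ε * m₀ ≤ δ / 4 := by
    calc L * ε * m₀ ≤ (L + 1) * ε * m₀ := by gcongr; linarith
      _ = δ / 4 := by rw [hε]; field_simp
  have e2 : C * η ≤ δ / 4 := by
    calc C * η ≤ (C + 1) * η := by gcongr; linarith
      _ = δ / 4 := by rw [hη]; field_simp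
  obtain ⟨K, hK1, hK2⟩ := ((h.eventually_interpolation_error_le hε0 hη0).and
    (Metric.tendsto_nhds.1 hW (δ / 4) (by positivity))).exists
  filter_upwards [hK1, Metric.tendsto_nhds.1 (hgrid K) (δ / 4) (by positivity),
    hmass.eventually_le_const (u := m₀) (by simp only [m₀]; linarith)] with n hn1 hn2 hn3
  have h3 := abs_integral_sub_integral_interpolate_le (VxyaN x y (a n) (N n)) hC hL K hε0.le
  have h4 : L * ε * (VxyaN x y (a n) (N n)).real univ ≤ L * ε * m₀ := by gcongr
  have h5 : C * (VxyaN x y (a n) (N n)).real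
    {ω | ε < dist ω (interpolate x y (gridValues K ω.1))} ≤ C * η := by gcongr
  rw [Real.dist_eq] at hn2 hK2 ⊢
  rw [abs_lt] at hn2 hK2 ⊢
  rw [abs_le] at h3
  constructor <;> linarith [h3.1, h3.2, hn2.1, hn2.2, hK2.1, hK2.2]

lemma integral_VxyaN_eq_zero_of_odd [NeZero d] {a : ℝ} (ha : 0 < a) {z : Fin d → ℤ}
    (hz : ∀ k, (y - x) k = a * z k) {N : ℕ} (hodd : ¬ Even ((N : ℤ) + ∑ k, z k))
    (f : Omega2 x y → ℝ) : ∫ ω, f ω ∂(VxyaN x y a N) = 0 := by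
  have hempty : IsEmpty {s : Fin N → Fin d × Bool // x + ∑ i, stepVec a (s i) = y} := by
    refine ⟨fun s => hodd ?_⟩
    have h1 := even_card_add_sum_latStep s.1
    rw [(sum_stepVec_eq_iff ha.ne' hz s.1).1 s.2] at h1
    simpa using h1
  rw [VxyaN, Measure.sum_of_isEmpty, integral_zero_measure]

end

section

variable {d : ℕ} {x y : Ed d}

lemma hasSum_integral_exp_mul_floor {c h B : ℝ} (hc : 0 < c) (hh : 0 < h) {φ : ℕ → ℝ}
    (hφ : ∀ N, |φ N| ≤ B) :
    HasSum (fun N : ℕ => φ N * (Real.exp (-(c * h)) ^ N * (1 - Real.exp (-(c * h))) / c))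
      (∫ t in Ioi (0 : ℝ), Real.exp (-c * t) * φ ⌊t / h⌋₊) := by
  have hunion : ⋃ N : ℕ, Ico (N * h) ((N + 1) * h) = Ici 0 := by
    ext t
    simp only [Set.mem_iUnion, Set.mem_Ico, Set.mem_Ici]
    constructor
    · rintro ⟨N, h1, -⟩
      exact le_trans (by positivity) h1
    · intro ht
      refine ⟨⌊t / h⌋₊, ?_, ?_⟩
      · rw [← le_div_iff₀ hh]; exact Nat.floor_le (by positivity)
      · rw [← div_lt_iff₀ hh]; exact Nat.lt_floor_add_one _
  have hfloor : ∀ (N : ℕ), ∀ t ∈ Ico (N * h) ((N + 1) * h), ⌊t / h⌋₊ = N := by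
    intro N t ht
    have ht0 : 0 ≤ t := le_trans (by positivity) ht.1
    rw [Nat.floor_eq_iff (by positivity), le_div_iff₀ hh, div_lt_iff₀ hh]
    exact ht
  have hdisj : Pairwise (Function.onFun Disjoint fun N : ℕ => Ico (N * h) ((N + 1) * h)) := by
    intro N N' hne
    refine Set.disjoint_left.2 fun t h1 h2 => hne ?_
    rw [← hfloor N t h1, ← hfloor N' t h2]
  have hInt : IntegrableOn (fun t => Real.exp (-c * t) * φ ⌊t / h⌋₊) (Ici 0) := by
    rw [integrableOn_Ici_iff_integrableOn_Ioi]
    refine (exp_neg_integrableOn_Ioi 0 hc).mul_bdd (c := B) ?_ (ae_of_all _ fun t => hφ _)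
    exact ((measurable_from_nat (f := φ)).comp
      (Nat.measurable_floor.comp (measurable_id.div_const h))).aestronglyMeasurable
  have hsum := hasSum_integral_iUnion (μ := volume) (fun N : ℕ => measurableSet_Ico)
    hdisj (by rw [hunion]; exact hInt)
  rw [hunion, integral_Ici_eq_integral_Ioi] at hsum
  refine hsum.congr_fun fun N => ?_
  have hle : N * h ≤ (N + 1) * h := by gcongr; linarith
  have hexp : ∫ t in (N * h)..((N + 1) * h), Real.exp (-c * t) =
      Real.exp (-(c * h)) ^ N * (1 - Real.exp (-(c * h))) / c := by
    rw [intervalIntegral.integral_comp_mul_left (fun t => Real.exp t) (neg_ne_zero.2 hc.ne'),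
      integral_exp, ← Real.exp_nat_mul,
      show -c * ((N + 1) * h) = N * -(c * h) + -(c * h) by ring, Real.exp_add,
      show -c * (N * h) = N * -(c * h) by ring, smul_eq_mul]
    field_simp
    ring
  rw [setIntegral_congr_fun (g := fun t => Real.exp (-c * t) * φ N) measurableSet_Ico
    fun t ht => by simp only [hfloor N t ht], integral_mul_const, integral_Ico_eq_integral_Ioo,
    ← integral_Ioc_eq_integral_Ioo, ← intervalIntegral.integral_of_le hle, hexp, mul_comm]

lemma exists_VxyaN_mass_le [NeZero d] (hxy : x ≠ y) : ∃ B : ℝ, 0 < B ∧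
    ∀ (a : ℝ) (z : Fin d → ℤ), 0 < a → (∀ k, (y - x) k = a * z k) →
      ∀ N, (VxyaN x y a N).real univ ≤ B := by
  obtain ⟨c, hc⟩ : ∃ c, (y - x) c ≠ 0 := by
    by_contra! hcon
    exact hxy (sub_eq_zero.1 (by ext k; simpa using hcon k)).symm
  obtain ⟨B, hB, h⟩ := exists_density_le c (r := |(y - x) c|) (abs_pos.2 hc)
  refine ⟨B, hB, fun a z ha hz N => ?_⟩
  have h1 := integral_VxyaN ha hz N (fun _ => (1 : ℝ))
  rw [integral_const, smul_eq_mul, mul_one, smul_eq_mul] at h1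
  rw [h1]
  exact h a N z ha (by rw [hz c, abs_mul, abs_of_pos ha])

lemma abs_integral_VxyaN_le [NeZero d] {B a : ℝ} {N : ℕ} (hB : (VxyaN x y a N).real univ ≤ B)
    (f : BoundedContinuousFunction (Omega2 x y) ℝ) :
    |∫ ω, f ω ∂(VxyaN x y a N)| ≤ ‖f‖ * B := by
  refine (norm_integral_le_of_norm_le_const (ae_of_all _ f.norm_coe_le_norm)).trans ?_
  gcongr

lemma hasSum_integral_Vxya [NeZero d] {m a B : ℝ} (hm : 0 < m) (ha : 0 < a)
    (hB : ∀ N, (VxyaN x y a N).real univ ≤ B) (f : BoundedContinuousFunction (Omega2 x y) ℝ) :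
    HasSum (fun N : ℕ => (1 - Real.exp (-(m ^ 2 / 2 * (a ^ 2 / d)))) *
        (Real.exp (-(m ^ 2 / 2 * (a ^ 2 / d))) ^ (N + 1) * ∫ ω, f ω ∂(VxyaN x y a (N + 1))))
      (∫ ω, f ω ∂(Vxya x y m a)) := by
  have hd : (0 : ℝ) < d := by exact_mod_cast NeZero.pos d
  set w := Real.exp (-(m ^ 2 / 2 * (a ^ 2 / d))) with hw
  have hw0 : 0 < w := Real.exp_pos _
  have hw1 : w < 1 := by
    rw [hw, Real.exp_lt_one_iff, Left.neg_neg_iff]; positivity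
  have e1 : Real.exp (-m ^ 2 * a ^ 2 / (2 * d)) = w := by rw [hw]; congr 1; field_simp
  have e2 : ∀ N : ℕ, Real.exp (-m ^ 2 * a ^ 2 * (N + 1) / (2 * d)) = w ^ (N + 1) := fun N => by
    rw [hw, ← Real.exp_nat_mul]; congr 1; push_cast; field_simp
  have hB0 : 0 ≤ B := measureReal_nonneg.trans (hB 0)
  have hfin : IsFiniteMeasure (Measure.sum fun N : ℕ =>
      ENNReal.ofReal (w ^ (N + 1)) • VxyaN x y a (N + 1)) := by
    refine ⟨?_⟩
    rw [Measure.sum_apply _ MeasurableSet.univ]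
    have hsum : Summable fun N : ℕ => w ^ (N + 1) * B :=
      ((summable_geometric_of_lt_one hw0.le hw1).comp_injective
        (add_left_injective 1)).mul_right B
    refine lt_of_le_of_lt (ENNReal.tsum_le_tsum fun N => ?_) hsum.tsum_ofReal_lt_top
    rw [Measure.smul_apply, smul_eq_mul, ENNReal.ofReal_mul (by positivity)]
    gcongr
    rw [← ENNReal.ofReal_toReal (measure_ne_top (VxyaN x y a (N + 1)) univ)]
    exact ENNReal.ofReal_le_ofReal (hB (N + 1))
  have h1 := hasSum_integral_measure (f.integrable (Measure.sum fun N : ℕ =>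
      ENNReal.ofReal (w ^ (N + 1)) • VxyaN x y a (N + 1)))
  rw [Vxya, e1, integral_smul_measure, ENNReal.toReal_ofReal (by linarith), smul_eq_mul]
  simp only [e2]
  refine HasSum.mul_left _ (h1.congr_fun fun N => ?_)
  rw [integral_smul_measure, ENNReal.toReal_ofReal (by positivity), smul_eq_mul]

lemma VxyaN_zero (hxy : x ≠ y) (a : ℝ) : VxyaN x y a 0 = 0 := by
  have hempty : IsEmpty {s : Fin 0 → Fin d × Bool // x + ∑ i, stepVec a (s i) = y} :=
    ⟨fun s => hxy (by simpa using s.2)⟩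
  rw [VxyaN, Measure.sum_of_isEmpty]

lemma integral_Vxya_eq [NeZero d] {m a B : ℝ} (hm : 0 < m) (hxy : x ≠ y) (ha : 0 < a)
    (hB : ∀ N, (VxyaN x y a N).real univ ≤ B) (f : BoundedContinuousFunction (Omega2 x y) ℝ) :
    ∫ ω, f ω ∂(Vxya x y m a) =
      m ^ 2 / 2 / (1 + (Real.exp (-(m ^ 2 / 2 * (a ^ 2 / d))))⁻¹) *
        ∫ t in Ioi (0 : ℝ), Real.exp (-(m ^ 2 / 2) * t) *
          (∫ ω, f ω ∂(VxyaN x y a ⌊t / (a ^ 2 / d)⌋₊) +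
            ∫ ω, f ω ∂(VxyaN x y a (⌊t / (a ^ 2 / d)⌋₊ + 1))) := by
  have hd : (0 : ℝ) < d := by exact_mod_cast NeZero.pos d
  have hc : 0 < m ^ 2 / 2 := by positivity
  have hh : 0 < a ^ 2 / d := by positivity
  have h1 := hasSum_integral_Vxya hm ha hB f
  have hI := fun N => abs_integral_VxyaN_le (hB N) f
  have h2 := hasSum_integral_exp_mul_floor hc hh (B := ‖f‖ * B + ‖f‖ * B)
    (φ := fun N => ∫ ω, f ω ∂(VxyaN x y a N) + ∫ ω, f ω ∂(VxyaN x y a (N + 1)))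
    fun N => (abs_add_le _ _).trans (add_le_add (hI _) (hI _))
  set w := Real.exp (-(m ^ 2 / 2 * (a ^ 2 / d)))
  have hw0 : 0 < w := Real.exp_pos _
  set J := fun N => ∫ ω, f ω ∂(VxyaN x y a N)
  set S := ∫ ω, f ω ∂(Vxya x y m a)
  have hI0 : J 0 = 0 := by simp [J, VxyaN_zero hxy]
  have h3 : HasSum (fun N : ℕ => (1 - w) * (w ^ N * J N)) S := by
    rw [← hasSum_nat_add_iff' 1]
    simpa [hI0] using h1
  have h4 : HasSum (fun N : ℕ => (J N + J (N + 1)) * (w ^ N * (1 - w) / (m ^ 2 / 2)))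
      ((S + S * w⁻¹) * (m ^ 2 / 2)⁻¹) := by
    refine ((h3.add (h1.mul_right w⁻¹)).mul_right (m ^ 2 / 2)⁻¹).congr_fun fun N => ?_
    change _ = ((1 - w) * (w ^ N * J N) + (1 - w) * (w ^ (N + 1) * J (N + 1)) * w⁻¹) * _
    field_simp
    ring
  rw [← h4.unique h2]
  field_simp

lemma tendsto_integral_VxyaN_add_succ [NeZero d] {Wt : ℝ → Measure (Omega2 x y)}
    (hWt : IsPinnedWienerFamily x y Wt) {a : ℕ → ℝ} {z : ℕ → Fin d → ℤ} (ha : ∀ n, 0 < a n)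
    (ha0 : Tendsto a atTop (𝓝 0)) (hz : ∀ n k, (y - x) k = a n * z n k) {t : ℝ} (ht : 0 < t)
    (f : BoundedContinuousFunction (Omega2 x y) ℝ) :
    Tendsto (fun n => ∫ ω, f ω ∂(VxyaN x y (a n) ⌊t / (a n ^ 2 / d)⌋₊) +
      ∫ ω, f ω ∂(VxyaN x y (a n) (⌊t / (a n ^ 2 / d)⌋₊ + 1))) atTop
      (𝓝 (2 * ∫ ω, f ω ∂(Wt t))) := by
  have hd : (0 : ℝ) < d := by exact_mod_cast NeZero.pos d
  have hh : ∀ n, 0 < a n ^ 2 / d := fun n => by have := ha n; positivity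
  have hh0 : Tendsto (fun n => a n ^ 2 / d) atTop (𝓝 0) := by
    simpa using (ha0.pow 2).div_const (d : ℝ)
  let M : ℕ → ℕ := fun n => ⌊t / (a n ^ 2 / d)⌋₊
  let N : ℕ → ℕ := fun n => if Even ((M n : ℤ) + ∑ k, z n k) then M n else M n + 1
  have hN1 : ∀ n, M n ≤ N n := fun n => by simp only [N]; split_ifs <;> omega
  have hN2 : ∀ n, N n ≤ M n + 1 := fun n => by simp only [N]; split_ifs <;> omega
  have hscale : DiffusiveScaling x y t a N z :=
    { time_pos := ht
      spacing_pos := ha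
      spacing_tendsto := ha0
      displacement := hz
      parity := fun n => by
        simp only [N]
        split_ifs with he
        · exact he
        · rw [Int.not_even_iff_odd] at he
          push_cast
          rw [add_right_comm]
          exact he.add_one
      time_tendsto := by
        refine tendsto_of_tendsto_of_tendsto_of_le_of_le (g := fun n => t - a n ^ 2 / d)
          (h := fun n => t + a n ^ 2 / d) (by simpa using hh0.const_sub t)
          (by simpa using hh0.const_add t) (fun n => ?_) fun n => ?_
        · have h1 : t / (a n ^ 2 / d) < M n + 1 := Nat.lt_floor_add_one _
          rw [div_lt_iff₀ (hh n)] at h1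
          have h2 : (M n : ℝ) ≤ N n := by exact_mod_cast hN1 n
          have h3 := mul_le_mul_of_nonneg_right h2 (hh n).le
          simp only [mul_div_assoc]
          linarith
        · have h1 : (M n : ℝ) ≤ t / (a n ^ 2 / d) := Nat.floor_le (by have := hh n; positivity)
          rw [le_div_iff₀ (hh n)] at h1
          have h2 : (N n : ℝ) ≤ M n + 1 := by exact_mod_cast hN2 n
          have h3 := mul_le_mul_of_nonneg_right h2 (hh n).le
          simp only [mul_div_assoc]
          linarith }
  refine (hscale.tendsto_integral hWt f).congr fun n => ?_
  change _ = ∫ ω, f ω ∂(VxyaN x y (a n) (M n)) + ∫ ω, f ω ∂(VxyaN x y (a n) (M n + 1))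
  by_cases he : Even ((M n : ℤ) + ∑ k, z n k)
  · have hodd : ¬ Even (((M n + 1 : ℕ) : ℤ) + ∑ k, z n k) := by
      rw [Int.not_even_iff_odd]
      push_cast
      rw [add_right_comm]
      exact he.add_one
    simp only [N, if_pos he]
    rw [integral_VxyaN_eq_zero_of_odd (ha n) (hz n) hodd, add_zero]
  · simp only [N, if_neg he]
    rw [integral_VxyaN_eq_zero_of_odd (ha n) (hz n) he, zero_add]

lemma tendsto_integral_Vxya_of_seq [NeZero d] {m : ℝ} (hm : 0 < m) (hxy : x ≠ y)
    {Wt : ℝ → Measure (Omega2 x y)} (hWt : IsPinnedWienerFamily x y Wt) {a : ℕ → ℝ}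
    {z : ℕ → Fin d → ℤ} (ha : ∀ n, 0 < a n) (ha0 : Tendsto a atTop (𝓝 0))
    (hz : ∀ n k, (y - x) k = a n * z n k) (f : BoundedContinuousFunction (Omega2 x y) ℝ) :
    Tendsto (fun n => ∫ ω, f ω ∂(Vxya x y m (a n))) atTop
      (𝓝 (m ^ 2 / 2 * ∫ t in Ioi (0 : ℝ), Real.exp (-m ^ 2 * t / 2) * ∫ ω, f ω ∂(Wt t))) := by
  have hc : 0 < m ^ 2 / 2 := by positivity
  obtain ⟨B, -, hB⟩ := exists_VxyaN_mass_le hxy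
  have hBn : ∀ n N, (VxyaN x y (a n) N).real univ ≤ B := fun n => hB (a n) (z n) (ha n) (hz n)
  have hJ : ∀ n N, |∫ ω, f ω ∂(VxyaN x y (a n) N)| ≤ ‖f‖ * B :=
    fun n N => abs_integral_VxyaN_le (hBn n N) f
  have hw : Tendsto (fun n => m ^ 2 / 2 / (1 + (Real.exp (-(m ^ 2 / 2 * (a n ^ 2 / d))))⁻¹))
      atTop (𝓝 (m ^ 2 / 2 / 2)) := by
    have h1 : Tendsto (fun n => -(m ^ 2 / 2 * (a n ^ 2 / d))) atTop (𝓝 0) := by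
      simpa using (((ha0.pow 2).div_const (d : ℝ)).const_mul (m ^ 2 / 2)).neg
    have h2 := (Real.continuous_exp.tendsto _).comp h1
    rw [Real.exp_zero] at h2
    have h3 := (tendsto_const_nhds (x := m ^ 2 / 2)).div
      ((h2.inv₀ one_ne_zero).const_add 1) (by norm_num)
    norm_num at h3 ⊢
    exact h3
  have hInt : Tendsto (fun n => ∫ t in Ioi (0 : ℝ), Real.exp (-(m ^ 2 / 2) * t) *
      (∫ ω, f ω ∂(VxyaN x y (a n) ⌊t / (a n ^ 2 / d)⌋₊) +
        ∫ ω, f ω ∂(VxyaN x y (a n) (⌊t / (a n ^ 2 / d)⌋₊ + 1)))) atTop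
      (𝓝 (∫ t in Ioi (0 : ℝ), Real.exp (-(m ^ 2 / 2) * t) * (2 * ∫ ω, f ω ∂(Wt t)))) := by
    refine tendsto_integral_of_dominated_convergence
      (fun t => Real.exp (-(m ^ 2 / 2) * t) * (‖f‖ * B + ‖f‖ * B)) (fun n => ?_)
      ((exp_neg_integrableOn_Ioi 0 hc).mul_const _) (fun n => ae_of_all _ fun t => ?_) ?_
    · have hmeas : Measurable fun t : ℝ => ∫ ω, f ω ∂(VxyaN x y (a n) ⌊t / (a n ^ 2 / d)⌋₊) +
          ∫ ω, f ω ∂(VxyaN x y (a n) (⌊t / (a n ^ 2 / d)⌋₊ + 1)) :=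
        (measurable_from_nat (f := fun N => ∫ ω, f ω ∂(VxyaN x y (a n) N) +
          ∫ ω, f ω ∂(VxyaN x y (a n) (N + 1)))).comp
          (Nat.measurable_floor.comp (measurable_id.div_const _))
      exact ((Real.measurable_exp.comp (measurable_id.const_mul _)).mul
        hmeas).aestronglyMeasurable
    · rw [norm_mul, Real.norm_eq_abs, Real.abs_exp]
      gcongr
      exact (abs_add_le _ _).trans (add_le_add (hJ _ _) (hJ _ _))
    · filter_upwards [ae_restrict_mem measurableSet_Ioi] with t ht
      exact (tendsto_integral_VxyaN_add_succ hWt ha ha0 hz ht f).const_mul _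
  have hlim := hw.mul hInt
  have e : m ^ 2 / 2 / 2 * (∫ t in Ioi (0 : ℝ), Real.exp (-(m ^ 2 / 2) * t) *
      (2 * ∫ ω, f ω ∂(Wt t))) =
      m ^ 2 / 2 * ∫ t in Ioi (0 : ℝ), Real.exp (-m ^ 2 * t / 2) * ∫ ω, f ω ∂(Wt t) := by
    rw [← integral_const_mul, ← integral_const_mul]
    congr 1
    ext t
    rw [show -(m ^ 2 / 2) * t = -m ^ 2 * t / 2 by ring]
    ring
  rw [e] at hlim
  exact hlim.congr fun n => (integral_Vxya_eq hm hxy (ha n) (hBn n) f).symm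

end

/-- **Theorem 3.3 (hypercubic case, strong form)**: `V'_{x,y,a} → (m²/2) V'_{x,y}`
weakly as `a → 0⁺` along values of `a` with `x - y ∈ aℤ^d`, where
`V'_{x,y}(A) = ∫_0^∞ e^{-m²t/2} W_{x,y}^t(A) dt`. -/
theorem Vxya_tendsto_weakly (d : ℕ) (hd : 1 ≤ d) (m : ℝ) (hm : 0 < m)
    (x y : Ed d) (hxy : x ≠ y)
    (Wt : ℝ → Measure (Omega2 x y)) (hWt : IsPinnedWienerFamily x y Wt) :
    ∀ f : BoundedContinuousFunction (Omega2 x y) ℝ,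
      Tendsto (fun a : ℝ => ∫ ω, f ω ∂(Vxya x y m a))
        ((nhdsWithin 0 (Set.Ioi 0)) ⊓
          Filter.principal {a : ℝ | ∃ z : Fin d → ℤ, ∀ j, (x - y) j = a * (z j)})
        (nhds ((m ^ 2 / 2) *
          ∫ t in Set.Ioi (0 : ℝ), Real.exp (-m ^ 2 * t / 2) * ∫ ω, f ω ∂(Wt t))) := by
  intro f
  have : NeZero d := ⟨by omega⟩
  refine tendsto_of_seq_tendsto fun a ha => ?_
  rw [tendsto_inf, tendsto_principal, tendsto_nhdsWithin_iff] at ha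
  obtain ⟨⟨ha0, hpos⟩, hadm⟩ := ha
  obtain ⟨n₀, hn₀⟩ := eventually_atTop.1 (hpos.and hadm)
  choose z hz using fun n => (hn₀ (n + n₀) (Nat.le_add_left _ _)).2
  refine (tendsto_add_atTop_iff_nat n₀).1 ?_
  refine tendsto_integral_Vxya_of_seq hm hxy hWt (a := fun n => a (n + n₀))
    (z := fun n k => -z n k) (fun n => (hn₀ (n + n₀) (Nat.le_add_left _ _)).1)
    ((tendsto_add_atTop_iff_nat n₀).2 ha0) (fun n k => ?_) f
  have h1 := hz n k
  simp only [PiLp.sub_apply] at h1 ⊢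
  push_cast
  linarith

end
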